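/- arXiv:2402.09887 — 2 statements merged into one kernel-verified Lean document; each statement's English description precedes it below -/
import Mathlib

section
/- Let μ be a Dyck path of size n+1, let {i} be the set of positions where μ has an innermost peak (a consecutive UR pair corresponding to an innermost cap of the associated diagram, with position n+1 corresponding to the rightmost vertical strand), and let μ_i be the Dyck path of size n obtained by deleting the corresponding UR pair. Then the generating function of cover-inclusive Dyck tilings satisfies Z(μ) = Σ_{i ∈ {i}} ([i]/[n+1]) · Z(μ_i). -/
noncomputable section
open scoped Classical

/-! ### The field `ℂ(q)` and quantum integers -/

/-- The field `ℂ(q)` of rational functions in one variable `q`. -/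
abbrev 𝕂 : Type := RatFunc ℂ

/-- The variable `q`. -/
def qA : 𝕂 := RatFunc.X

/-- The quantum integer `[n] = (q^n - q^{-n})/(q - q^{-1})`. -/
def qInt (n : ℤ) : 𝕂 := (qA ^ n - qA⁻¹ ^ n) / (qA - qA⁻¹)

/-! ### Dyck paths -/

/-- A Dyck path, encoded as a list of booleans: `true` = up step `U = (1,1)`,
`false` = down step `R = (1,-1)`; the path never goes below the horizontal axis
and ends on it. -/
def IsDyckPath (μ : List Bool) : Prop :=
  μ.count true = μ.count false ∧ ∀ k : ℕ, (μ.take k).count false ≤ (μ.take k).count true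

/-- Dyck paths of size `n` (length `2n`).  Under the folding bijection these index the
`n`-strand Temperley–Lieb diagrams. -/
def DyckPath (n : ℕ) : Type := {μ : List Bool // μ.length = 2 * n ∧ IsDyckPath μ}

/-- The (1-based) position of the first peak `UR` of a path, together with the path
obtained by deleting this `UR` pair.  For a diagram, the first peak is an innermost cap. -/
def stripPeak : List Bool → ℕ × List Bool
  | true :: false :: rest => (1, rest)
  | b :: rest => ((stripPeak rest).1 + 1, b :: (stripPeak rest).2)
  | [] => (0, [])

/-- The set of (1-based) positions `j` such that step `j` is `U` and step `j+1` is `R`.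
For the associated Temperley–Lieb diagram, such a position `j ≤ n` is an innermost cap
joining bottom points `j, j+1`, and `j = n+1` (for an `(n+1)`-strand diagram) is the
rightmost vertical strand. -/
def peaks (μ : List Bool) : Finset ℕ :=
  (Finset.Icc 1 μ.length).filter fun j => μ[j - 1]? = some true ∧ μ[j]? = some false

/-- Delete the `UR` pair at (1-based) position `j`; for diagrams this removes the
corresponding innermost cap. -/
def removePeak (μ : List Bool) (j : ℕ) : List Bool := μ.take (j - 1) ++ μ.drop (j + 1)

/-- The height of the path `μ` (drawn from `(0,0)` with steps `(1,±1)`) at abscissa `x`. -/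
def pht (μ : List Bool) (x : ℤ) : ℤ := 2 * ((μ.take x.toNat).count true : ℤ) - x

/-- The Dyck path `U^i R U^(n-i) R^(n-1)` of the diagram `g_{n,i}` (`1 ≤ i ≤ n`). -/
def gpath (n i : ℕ) : List Bool :=
  List.replicate i true ++ [false] ++ List.replicate (n - i) true ++ List.replicate (n - 1) false

/-! ### Cover-inclusive Dyck tilings -/

/-- The centers of the unit boxes of the region `R(μ)` above the Dyck path `μ`
(of size `n`) and below the top path `UⁿRⁿ`. -/
def region (n : ℕ) (μ : List Bool) : Set (ℤ × ℤ) :=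
  {p | 1 ≤ p.1 ∧ p.1 ≤ 2 * n - 1 ∧ Odd (p.1 + p.2) ∧
    pht μ p.1 < p.2 ∧ p.2 < min p.1 (2 * n - p.1)}

/-- A Dyck tile: a ribbon of unit boxes whose centers form a Dyck path. -/
def IsDyckTile (d : Finset (ℤ × ℤ)) : Prop :=
  ∃ (x₀ y₀ : ℤ) (k : ℕ) (f : ℕ → ℤ),
    f 0 = y₀ ∧ f k = y₀ ∧ (∀ j < k, f (j + 1) = f j + 1 ∨ f (j + 1) = f j - 1) ∧
    (∀ j ≤ k, y₀ ≤ f j) ∧ d = (Finset.range (k + 1)).image fun j : ℕ => (x₀ + (j : ℤ), f j)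

/-- `h(d)`: the minimal height of the centers of the boxes of a tile `d`. -/
def tileHt (d : Finset (ℤ × ℤ)) : ℤ := sInf (Prod.snd '' (d : Set (ℤ × ℤ)))

/-- The size of a Dyck tile (a tile of size `s` consists of `2s+1` boxes). -/
def tileSize (d : Finset (ℤ × ℤ)) : ℕ := (d.card - 1) / 2

/-- A cover-inclusive Dyck tiling of the region between `μ` and the top path `UⁿRⁿ`:
a collection of Dyck tiles partitioning the region such that the translate of any tile
by `(0,-2)` is strictly below `μ` or contained in another tile. -/
def IsCITiling (n : ℕ) (μ : List Bool) (T : Finset (Finset (ℤ × ℤ))) : Prop :=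
  (∀ d ∈ T, IsDyckTile d) ∧
  (∀ d ∈ T, ∀ p ∈ d, p ∈ region n μ) ∧
  (∀ p ∈ region n μ, ∃! d, d ∈ T ∧ p ∈ d) ∧
  (∀ d ∈ T, (∀ p ∈ d, p.2 - 2 < pht μ p.1) ∨ ∃ d' ∈ T, ∀ p ∈ d, ((p.1, p.2 - 2) : ℤ × ℤ) ∈ d')

/-- The generating function `Z(μ) = Σ_{D ∈ 𝒟(μ)} Π_{d ∈ D} [h(d)]/[h(d)+1]` of
cover-inclusive Dyck tilings above `μ`. -/
def ZA (n : ℕ) (μ : List Bool) : 𝕂 :=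
  ∑ᶠ T ∈ {T : Finset (Finset (ℤ × ℤ)) | IsCITiling n μ T},
    ∏ d ∈ T, qInt (tileHt d) / qInt (tileHt d + 1)

/-! ### Geometry: tilings above a height function -/

/-- The region above the graph of a height function. -/
def reg (N : ℕ) (f : ℤ → ℤ) : Set (ℤ × ℤ) :=
  {p | 1 ≤ p.1 ∧ p.1 ≤ 2 * N - 1 ∧ Odd (p.1 + p.2) ∧
    f p.1 < p.2 ∧ p.2 < min p.1 (2 * N - p.1)}

/-- Cover-inclusive tilings above a height function. -/
def IsCI (N : ℕ) (f : ℤ → ℤ) (T : Finset (Finset (ℤ × ℤ))) : Prop :=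
  (∀ d ∈ T, IsDyckTile d) ∧
  (∀ d ∈ T, ∀ p ∈ d, p ∈ reg N f) ∧
  (∀ p ∈ reg N f, ∃! d, d ∈ T ∧ p ∈ d) ∧
  (∀ d ∈ T, (∀ p ∈ d, p.2 - 2 < f p.1) ∨ ∃ d' ∈ T, ∀ p ∈ d, ((p.1, p.2 - 2) : ℤ × ℤ) ∈ d')

lemma tile_iff (d : Finset (ℤ × ℤ)) : IsDyckTile d ↔ ∃ (a b : ℤ) (φ : ℤ → ℤ),
    a ≤ b ∧ φ a = φ b ∧ (∀ x, a ≤ x → x < b → φ (x + 1) = φ x + 1 ∨ φ (x + 1) = φ x - 1) ∧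
    (∀ x, a ≤ x → x ≤ b → φ a ≤ φ x) ∧ ∀ p, p ∈ d ↔ a ≤ p.1 ∧ p.1 ≤ b ∧ p.2 = φ p.1 := by
  constructor
  · rintro ⟨x₀, y₀, k, f, h0, hk, hs, hm, rfl⟩
    refine ⟨x₀, x₀ + k, fun x => f (x - x₀).toNat, by omega, by simp [h0, hk], ?_, ?_, ?_⟩
    · intro x hx hx'
      have := hs (x - x₀).toNat (by omega)
      have e : (x + 1 - x₀).toNat = (x - x₀).toNat + 1 := by omega
      simpa [e] using this
    · intro x hx hx'
      have := hm (x - x₀).toNat (by omega)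
      simpa [h0] using this
    · rintro ⟨x, y⟩
      simp only [Finset.mem_image, Finset.mem_range, Prod.mk.injEq]
      constructor
      · rintro ⟨j, hj, rfl, rfl⟩
        refine ⟨by omega, by omega, ?_⟩
        congr 1; omega
      · rintro ⟨h1, h2, rfl⟩
        exact ⟨(x - x₀).toNat, by omega, by omega, rfl⟩
  · rintro ⟨a, b, φ, hab, he, hs, hm, hd⟩
    refine ⟨a, φ a, (b - a).toNat, fun j => φ (a + j), by simp, ?_, ?_, ?_, ?_⟩
    · have : a + ((b - a).toNat : ℤ) = b := by omega
      simp only [this, he]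
    · intro j hj
      have := hs (a + j) (by omega) (by omega)
      have e : a + ((j + 1 : ℕ) : ℤ) = a + j + 1 := by push_cast; ring
      simpa only [e] using this
    · intro j hj
      exact hm _ (by omega) (by omega)
    · ext ⟨x, y⟩
      rw [hd]
      simp only [Finset.mem_image, Finset.mem_range, Prod.mk.injEq]
      constructor
      · rintro ⟨h1, h2, rfl⟩
        have e : a + (((x - a).toNat : ℕ) : ℤ) = x := by omega
        exact ⟨(x - a).toNat, by omega, e, by rw [e]⟩
      · rintro ⟨j, hj, rfl, rfl⟩
        exact ⟨by omega, by omega, rfl⟩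

/-- The strip of boxes directly above the graph of `f` over `[a,b]`. -/
def strip (f : ℤ → ℤ) (a b : ℤ) : Finset (ℤ × ℤ) :=
  (Finset.Icc a b).image fun x => (x, f x + 1)

lemma mem_strip (f : ℤ → ℤ) (a b : ℤ) (p : ℤ × ℤ) :
    p ∈ strip f a b ↔ a ≤ p.1 ∧ p.1 ≤ b ∧ p.2 = f p.1 + 1 := by
  obtain ⟨x, y⟩ := p
  simp only [strip, Finset.mem_image, Finset.mem_Icc, Prod.mk.injEq]
  constructor
  · rintro ⟨z, hz, rfl, rfl⟩
    exact ⟨hz.1, hz.2, rfl⟩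
  · rintro ⟨h1, h2, rfl⟩
    exact ⟨x, ⟨h1, h2⟩, rfl, rfl⟩

lemma strip_tile (f : ℤ → ℤ) (a b : ℤ) (hab : a ≤ b) (he : f a = f b)
    (hs : ∀ x, a ≤ x → x < b → f (x + 1) = f x + 1 ∨ f (x + 1) = f x - 1)
    (hm : ∀ x, a ≤ x → x ≤ b → f a ≤ f x) : IsDyckTile (strip f a b) := by
  rw [tile_iff]
  refine ⟨a, b, fun x => f x + 1, hab, by simp [he], ?_, ?_, mem_strip f a b⟩
  · intro x h1 h2
    have := hs x h1 h2
    dsimp only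
    omega
  · intro x h1 h2
    have := hm x h1 h2
    dsimp only
    omega

lemma strip_ht (f : ℤ → ℤ) (a b : ℤ) (hab : a ≤ b)
    (hm : ∀ x, a ≤ x → x ≤ b → f a ≤ f x) : tileHt (strip f a b) = f a + 1 := by
  have : IsLeast (Prod.snd '' ((strip f a b : Finset (ℤ × ℤ)) : Set (ℤ × ℤ))) (f a + 1) := by
    constructor
    · refine ⟨(a, f a + 1), ?_, rfl⟩
      rw [Finset.mem_coe, mem_strip]
      exact ⟨le_refl _, hab, rfl⟩
    · rintro y ⟨p, hp, rfl⟩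
      rw [Finset.mem_coe, mem_strip] at hp
      have := hm p.1 hp.1 hp.2.1
      omega
  exact this.csInf_eq

lemma strip_inj (f : ℤ → ℤ) (a b b' : ℤ) (hab : a ≤ b) (hab' : a ≤ b')
    (h : strip f a b = strip f a b') : b = b' := by
  have h1 : (b, f b + 1) ∈ strip f a b' := by
    rw [← h, mem_strip]; exact ⟨hab, le_refl _, rfl⟩
  have h2 : (b', f b' + 1) ∈ strip f a b := by
    rw [h, mem_strip]; exact ⟨hab', le_refl _, rfl⟩
  rw [mem_strip] at h1 h2
  have := h1.2.1
  have := h2.2.1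
  dsimp only at *
  omega

/-- A tile touching the bottom is a strip. -/
lemma bottom_tile {N : ℕ} {f : ℤ → ℤ} {T : Finset (Finset (ℤ × ℤ))} (hT : IsCI N f T)
    {d : Finset (ℤ × ℤ)} (hd : d ∈ T) {x : ℤ} (hx : (x, f x + 1) ∈ d) :
    ∃ a b, a ≤ x ∧ x ≤ b ∧ f a = f b ∧ (∀ z, a ≤ z → z ≤ b → f a ≤ f z) ∧ d = strip f a b := by
  obtain ⟨a, b, φ, hab, he, hs, hm, hmem⟩ := (tile_iff d).1 (hT.1 d hd)
  have key : ∀ p ∈ d, p.2 = f p.1 + 1 := by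
    intro p hp
    have hr := hT.2.1 d hd p hp
    rcases hT.2.2.2 d hd with h | ⟨d', hd', h⟩
    · have := h p hp
      have := hr.2.2.2.1
      omega
    · exfalso
      have := (hT.2.1 d' hd' _ (h _ hx)).2.2.2.1
      dsimp only at this
      omega
  have hφ : ∀ z, a ≤ z → z ≤ b → φ z = f z + 1 := by
    intro z h1 h2
    exact key (z, φ z) ((hmem _).2 ⟨h1, h2, rfl⟩)
  have hx' := (hmem _).1 hx
  refine ⟨a, b, hx'.1, hx'.2.1, ?_, ?_, ?_⟩
  · have := hφ a (le_refl _) hab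
    have := hφ b hab (le_refl _)
    omega
  · intro z h1 h2
    have := hφ a (le_refl _) hab
    have := hφ z h1 h2
    have := hm z h1 h2
    omega
  · ext p
    rw [hmem, mem_strip]
    constructor
    · rintro ⟨h1, h2, h3⟩
      exact ⟨h1, h2, by rw [h3, hφ _ h1 h2]⟩
    · rintro ⟨h1, h2, h3⟩
      exact ⟨h1, h2, by rw [h3, hφ _ h1 h2]⟩

/-- Hypotheses on a height function starting with `i` up steps and then a down step. -/
structure Good (N : ℕ) (f : ℤ → ℤ) (i : ℤ) : Prop where
  i0 : 0 ≤ i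
  iN : i < N
  left : ∀ x, 0 ≤ x → x ≤ i → f x = x
  down : f (i + 1) = i - 1
  step : ∀ x : ℤ, 0 ≤ x → x < 2 * N → f (x + 1) = f x + 1 ∨ f (x + 1) = f x - 1
  par : ∀ x, Even (f x + x)
  last : f (2 * N) = 0

/-- Possible right ends of the first tile. -/
def FT (N : ℕ) (f : ℤ → ℤ) (i c : ℤ) : Prop :=
  i + 1 ≤ c ∧ c + i < 2 * N ∧ f c = i - 1 ∧ ∀ x, i + 1 ≤ x → x ≤ c → i - 1 ≤ f x

lemma Good.lip {N : ℕ} {f : ℤ → ℤ} {i : ℤ} (H : Good N f i) (x y : ℤ) (hx : 0 ≤ x) (hxy : x ≤ y) :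
    y ≤ 2 * N → f y ≤ f x + (y - x) ∧ f x ≤ f y + (y - x) := by
  induction y, hxy using Int.leInduction with
  | base => intro _; omega
  | succ m hm ih =>
    intro h
    have := ih (by omega)
    have := H.step m (by omega) (by omega)
    omega

lemma Good.col {N : ℕ} {f : ℤ → ℤ} {i : ℤ} (H : Good N f i) {p : ℤ × ℤ} (hp : p ∈ reg N f) :
    i + 1 ≤ p.1 := by
  by_contra h
  obtain ⟨h1, h2, h3, h4, h5⟩ := hp
  have := H.left p.1 (by omega) (by omega)
  have := lt_min_iff.1 h5
  omega

lemma Good.ft_reg {N : ℕ} {f : ℤ → ℤ} {i c : ℤ} (H : Good N f i) (hc : FT N f i c) :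
    ∀ p ∈ strip f (i + 1) c, p ∈ reg N f := by
  intro p hp
  rw [mem_strip] at hp
  obtain ⟨h1, h2, h3⟩ := hp
  obtain ⟨c1, c2, c3, c4⟩ := hc
  have hi := H.i0
  have l1 := H.lip (i + 1) p.1 (by omega) h1 (by omega)
  have l2 := H.lip p.1 c (by omega) h2 (by omega)
  have hd := H.down
  refine ⟨by omega, ?_, ?_, by omega, ?_⟩
  · have := c4 p.1 h1 h2
    by_contra hh
    have : p.1 = c := by omega
    have : i = 0 := by omega
    subst this
    have : c = 2 * N - 0 := by omega
    omega
  · rw [h3]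
    obtain ⟨k, hk⟩ := H.par p.1
    exact ⟨k, by omega⟩
  · rw [lt_min_iff]; omega

lemma Good.ft_tile {N : ℕ} {f : ℤ → ℤ} {i c : ℤ} (H : Good N f i) (hc : FT N f i c) :
    IsDyckTile (strip f (i + 1) c) := by
  obtain ⟨c1, c2, c3, c4⟩ := hc
  have hi := H.i0
  have hd := H.down
  apply strip_tile _ _ _ c1 (by omega)
  · intro x h1 h2
    exact H.step x (by omega) (by omega)
  · intro x h1 h2
    have := c4 x h1 h2
    omega

lemma Good.ft_ht {N : ℕ} {f : ℤ → ℤ} {i c : ℤ} (H : Good N f i) (hc : FT N f i c) :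
    tileHt (strip f (i + 1) c) = i := by
  obtain ⟨c1, c2, c3, c4⟩ := hc
  have hd := H.down
  rw [strip_ht _ _ _ c1]
  · omega
  · intro x h1 h2
    have := c4 x h1 h2
    omega

lemma Good.first_mem {N : ℕ} {f : ℤ → ℤ} {i : ℤ} (H : Good N f i) : (i + 1, f (i + 1) + 1) ∈ reg N f := by
  have := H.i0
  have := H.iN
  have := H.down
  refine ⟨by dsimp only; omega, by dsimp only; omega, ⟨i, by dsimp only; omega⟩, by dsimp only; omega, ?_⟩
  rw [lt_min_iff]
  dsimp only
  omega

/-- Every tiling contains exactly one first tile. -/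
lemma Good.first {N : ℕ} {f : ℤ → ℤ} {i : ℤ} (H : Good N f i) {T : Finset (Finset (ℤ × ℤ))}
    (hT : IsCI N f T) : ∃! c, FT N f i c ∧ strip f (i + 1) c ∈ T := by
  obtain ⟨d, ⟨hd, hm⟩, hu⟩ := hT.2.2.1 _ H.first_mem
  obtain ⟨a, b, h1, h2, h3, h4, rfl⟩ := bottom_tile hT hd hm
  have ha := H.col (hT.2.1 _ hd (a, f a + 1) ((mem_strip ..).2 ⟨le_refl _, by dsimp only; omega, rfl⟩))
  have hb := (hT.2.1 _ hd (b, f b + 1) ((mem_strip ..).2 ⟨by dsimp only; omega, le_refl _, rfl⟩)).2.2.2.2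
  dsimp only at ha hb
  rw [lt_min_iff] at hb
  obtain rfl : a = i + 1 := by omega
  have hd' := H.down
  refine ⟨b, ⟨⟨h2, by omega, by omega, fun x hx hx' => ?_⟩, hd⟩, ?_⟩
  · have := h4 x hx hx'
    omega
  · rintro c ⟨hc, hcT⟩
    have := hu _ ⟨hcT, (mem_strip ..).2 ⟨le_refl _, hc.1, rfl⟩⟩
    exact strip_inj f _ _ _ hc.1 h2 this

/-- Raise a height function by 2 on `[a,c]`. -/
def raise (f : ℤ → ℤ) (a c : ℤ) : ℤ → ℤ := fun x => if a ≤ x ∧ x ≤ c then f x + 2 else f x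

lemma reg_raise {N : ℕ} {f : ℤ → ℤ} {i c : ℤ} (H : Good N f i) (p : ℤ × ℤ) :
    p ∈ reg N (raise f (i + 1) c) ↔ p ∈ reg N f ∧ p ∉ strip f (i + 1) c := by
  rw [mem_strip]
  unfold reg raise
  simp only [Set.mem_ofPred_eq]
  have hp := H.par p.1
  rw [Int.even_iff] at hp
  rw [Int.odd_iff]
  split_ifs with h
  · constructor
    · rintro ⟨h1, h2, h3, h4, h5⟩
      exact ⟨⟨h1, h2, h3, by omega, h5⟩, by omega⟩
    · rintro ⟨⟨h1, h2, h3, h4, h5⟩, h6⟩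
      exact ⟨h1, h2, h3, by omega, h5⟩
  · constructor
    · rintro h'
      exact ⟨h', by omega⟩
    · rintro h'
      exact h'.1

/-- Removing the first tile when it is followed by an up step. -/
lemma up_iff {N : ℕ} {f : ℤ → ℤ} {i c : ℤ} (H : Good N f i) (hc : FT N f i c)
    (hu : f (c + 1) = f c + 1) (R : Finset (Finset (ℤ × ℤ))) :
    (strip f (i + 1) c ∉ R ∧ IsCI N f (insert (strip f (i + 1) c) R)) ↔
      IsCI N (raise f (i + 1) c) R := by
  set S := strip f (i + 1) c with hS
  have hfst : (i + 1, f (i + 1) + 1) ∈ S := (mem_strip ..).2 ⟨le_refl _, hc.1, rfl⟩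
  constructor
  · rintro ⟨hSR, h1, h2, h3, h4⟩
    have hdisj : ∀ d ∈ R, ∀ p ∈ d, p ∉ S := by
      intro d hd p hp hpS
      have hr := h2 S (Finset.mem_insert_self _ _) p hpS
      have := (h3 p hr).unique ⟨Finset.mem_insert_of_mem hd, hp⟩ ⟨Finset.mem_insert_self _ _, hpS⟩
      exact hSR (this ▸ hd)
    refine ⟨fun d hd => h1 d (Finset.mem_insert_of_mem hd), ?_, ?_, ?_⟩
    · intro d hd p hp
      rw [reg_raise H]
      exact ⟨h2 d (Finset.mem_insert_of_mem hd) p hp, hdisj d hd p hp⟩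
    · intro p hp
      rw [reg_raise H] at hp
      obtain ⟨d, ⟨hd, hpd⟩, hun⟩ := h3 p hp.1
      refine ⟨d, ⟨?_, hpd⟩, fun e he => hun e ⟨Finset.mem_insert_of_mem he.1, he.2⟩⟩
      rcases Finset.mem_insert.1 hd with rfl | h
      · exact absurd hpd hp.2
      · exact h
    · intro d hd
      rcases h4 d (Finset.mem_insert_of_mem hd) with h | ⟨d', hd', h⟩
      · left
        intro p hp
        have := h p hp
        unfold raise
        split_ifs <;> omega
      · rcases Finset.mem_insert.1 hd' with rfl | h'
        · left
          intro p hp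
          have := (mem_strip ..).1 (h p hp)
          dsimp only at this
          unfold raise
          rw [if_pos ⟨this.1, this.2.1⟩]
          omega
        · exact Or.inr ⟨d', h', h⟩
  · rintro ⟨h1, h2, h3, h4⟩
    have hSR : S ∉ R := by
      intro h
      exact ((reg_raise H _).1 (h2 S h _ hfst)).2 hfst
    refine ⟨hSR, ?_, ?_, ?_, ?_⟩
    · intro d hd
      rcases Finset.mem_insert.1 hd with rfl | h
      · exact H.ft_tile hc
      · exact h1 d h
    · intro d hd p hp
      rcases Finset.mem_insert.1 hd with rfl | h
      · exact H.ft_reg hc p hp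
      · exact ((reg_raise H _).1 (h2 d h p hp)).1
    · intro p hp
      by_cases hpS : p ∈ S
      · refine ⟨S, ⟨Finset.mem_insert_self _ _, hpS⟩, ?_⟩
        rintro e ⟨he, hpe⟩
        rcases Finset.mem_insert.1 he with rfl | h
        · rfl
        · exact absurd hpS ((reg_raise H _).1 (h2 e h p hpe)).2
      · obtain ⟨d, ⟨hd, hpd⟩, hun⟩ := h3 p ((reg_raise H _).2 ⟨hp, hpS⟩)
        refine ⟨d, ⟨Finset.mem_insert_of_mem hd, hpd⟩, ?_⟩
        rintro e ⟨he, hpe⟩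
        rcases Finset.mem_insert.1 he with rfl | h
        · exact absurd hpe hpS
        · exact hun e ⟨h, hpe⟩
    · intro d hd
      rcases Finset.mem_insert.1 hd with rfl | hd
      · left
        intro p hp
        have := (mem_strip ..).1 hp
        omega
      · rcases h4 d hd with h | ⟨d', hd', h⟩
        · obtain ⟨a, b, φ, hab, he, hs, hm, hmem⟩ := (tile_iff d).1 (h1 d hd)
          have hval : ∀ x, a ≤ x → x ≤ b → φ x = raise f (i + 1) c x + 1 := by
            intro x hx hx'
            have hp : (x, φ x) ∈ d := (hmem _).2 ⟨hx, hx', rfl⟩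
            have := h _ hp
            have := (h2 d hd _ hp).2.2.2.1
            dsimp only at *
            omega
          have ha := H.col ((reg_raise H _).1 (h2 d hd (a, φ a) ((hmem _).2 ⟨le_refl _, hab, rfl⟩))).1
          dsimp only at ha
          by_cases hac : a ≤ c
          · right
            have hbc : b ≤ c := by
              by_contra hbc
              have e1 := hval a (le_refl _) hab
              have e2 := hval (c + 1) (by omega) (by omega)
              have e3 := hm (c + 1) (by omega) (by omega)
              unfold raise at e1 e2
              rw [if_pos ⟨ha, hac⟩] at e1
              rw [if_neg (by omega)] at e2
              have := hc.2.2.2 a ha hac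
              have := hc.2.2.1
              omega
            refine ⟨S, Finset.mem_insert_self _ _, ?_⟩
            intro p hp
            have hp' := (hmem _).1 hp
            have e := hval p.1 hp'.1 hp'.2.1
            unfold raise at e
            rw [if_pos ⟨by omega, by omega⟩] at e
            refine (mem_strip ..).2 ⟨by dsimp only; omega, by dsimp only; omega, by dsimp only; omega⟩
          · left
            intro p hp
            have hp' := (hmem _).1 hp
            have e := h p hp
            unfold raise at e
            rw [if_neg (by omega)] at e
            exact e
        · exact Or.inr ⟨d', Finset.mem_insert_of_mem hd', h⟩

/-- Lower a height function at `i` to the value `i - 2`. -/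
def lower (f : ℤ → ℤ) (i : ℤ) : ℤ → ℤ := fun x => if x = i then i - 2 else f x

lemma lower_self (f : ℤ → ℤ) (i : ℤ) : lower f i i = i - 2 := by simp [lower]

lemma lower_ne (f : ℤ → ℤ) (i x : ℤ) (h : x ≠ i) : lower f i x = f x := by simp [lower, h]

lemma raise_lower {N : ℕ} {f : ℤ → ℤ} {i : ℤ} (H : Good N f i) : raise (lower f i) i i = f := by
  funext x
  unfold raise lower
  have := H.left i H.i0 (le_refl _)
  by_cases h : x = i
  · subst h; simp; omega
  · rw [if_neg (by omega), if_neg h]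

lemma Good.lower {N : ℕ} {f : ℤ → ℤ} {i : ℤ} (H : Good N f i) (hi : 1 ≤ i) :
    Good N (lower f i) (i - 1) := by
  have h1 := H.iN
  have h2 := H.down
  have h3 := H.left i (by omega) (le_refl _)
  have h4 := H.left (i - 1) (by omega) (by omega)
  refine ⟨by omega, by omega, ?_, ?_, ?_, ?_, ?_⟩
  · intro x hx hx'
    rw [lower_ne _ _ _ (by omega)]
    exact H.left x hx (by omega)
  · rw [sub_add_cancel, lower_self]; ring
  · intro x hx hx'
    by_cases e : x = i
    · subst e
      rw [lower_self, lower_ne _ _ _ (by omega)]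
      omega
    · by_cases e' : x + 1 = i
      · obtain rfl : x = i - 1 := by omega
        rw [e', lower_self, lower_ne _ _ _ (by omega)]
        omega
      · rw [lower_ne _ _ _ e, lower_ne _ _ _ e']
        exact H.step x hx hx'
  · intro x
    by_cases e : x = i
    · subst e
      rw [lower_self]
      exact ⟨x - 1, by ring⟩
    · rw [lower_ne _ _ _ e]
      exact H.par x
  · rw [lower_ne _ _ _ (by omega)]
    exact H.last

lemma reg_lower {N : ℕ} {f : ℤ → ℤ} {i : ℤ} (H : Good N f i) (hi : 1 ≤ i) (p : ℤ × ℤ) :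
    p ∈ reg N (lower f i) ↔ p = (i, i - 1) ∨ p ∈ reg N f := by
  have H' := H.lower hi
  have hr : ∀ p, p ∈ reg N f ↔ p ∈ reg N (lower f i) ∧ p ∉ strip (lower f i) i i := by
    intro p
    have := reg_raise H' (c := i) p
    rw [sub_add_cancel, raise_lower H] at this
    exact this
  have hm : p ∈ strip (lower f i) i i ↔ p = (i, i - 1) := by
    rw [mem_strip]
    obtain ⟨x, y⟩ := p
    simp only [Prod.mk.injEq]
    constructor
    · rintro ⟨h1, h2, h3⟩
      obtain rfl : x = i := by omega
      rw [lower_self] at h3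
      omega
    · rintro ⟨rfl, rfl⟩
      rw [lower_self]
      omega
  rw [hr, hm]
  have h0 : (i, i - 1) ∈ reg N (lower f i) := by
    have := H'.first_mem
    rw [sub_add_cancel, lower_self] at this
    convert this using 2
    ring
  constructor
  · intro h
    by_cases e : p = (i, i - 1)
    · exact Or.inl e
    · exact Or.inr ⟨h, e⟩
  · rintro (rfl | h)
    · exact h0
    · exact h.1

lemma ft_lower_data {N : ℕ} {f : ℤ → ℤ} {i b : ℤ} 
    (hb : FT N (lower f i) (i - 1) b) (hib : i < b) :
    b + i ≤ 2 * N ∧ f b = i - 2 ∧ ∀ x, i + 1 ≤ x → x ≤ b → i - 2 ≤ f x := by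
  obtain ⟨b1, b2, b3, b4⟩ := hb
  rw [lower_ne _ _ _ (by omega)] at b3
  refine ⟨by omega, by omega, ?_⟩
  intro x hx hx'
  have := b4 x (by omega) hx'
  rw [lower_ne _ _ _ (by omega)] at this
  omega

lemma ft_lower_gt {N : ℕ} {f : ℤ → ℤ} {i b c : ℤ} 
    (hb : FT N (lower f i) (i - 1) b) (hib : i < b) (hc : FT N f i c) : c + 1 ≤ b := by
  obtain ⟨b1, b2, b3⟩ := ft_lower_data hb hib
  by_contra h
  have := hc.2.2.2 b (by omega) (by omega)
  omega

/-- Merging the first two tiles with the new box when the first tile is followed by a down step. -/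
lemma down_iff {N : ℕ} {f : ℤ → ℤ} {i b c : ℤ} (H : Good N f i) (hi : 1 ≤ i) (hc : FT N f i c)
    (hdn : f (c + 1) = f c - 1) (hb : FT N (lower f i) (i - 1) b) (hib : i < b)
    (R : Finset (Finset (ℤ × ℤ))) :
    (strip f (c + 1) b ∉ R ∧ (strip f (i + 1) c ∉ insert (strip f (c + 1) b) R ∧
      IsCI N f (insert (strip f (i + 1) c) (insert (strip f (c + 1) b) R)))) ↔
      (strip (lower f i) i b ∉ R ∧ IsCI N (lower f i) (insert (strip (lower f i) i b) R)) := by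
  have H' := H.lower hi
  have hcb := ft_lower_gt hb hib hc
  obtain ⟨b1, b2, b3⟩ := ft_lower_data hb hib
  have hE_tile := H'.ft_tile hb
  have hE_reg := H'.ft_reg hb
  have hS_tile := H.ft_tile hc
  have hS_reg := H.ft_reg hc
  rw [sub_add_cancel] at hE_tile hE_reg
  have hc1 := hc.1
  have hc3 := hc.2.2.1
  have hc4 := hc.2.2.2
  have hEmem : ∀ p, p ∈ strip (lower f i) i b ↔
      p = (i, i - 1) ∨ p ∈ strip f (i + 1) c ∨ p ∈ strip f (c + 1) b := by
    rintro ⟨x, y⟩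
    simp only [mem_strip, Prod.mk.injEq]
    by_cases e : x = i
    · subst e
      rw [lower_self]
      omega
    · rw [lower_ne _ _ _ e]
      omega
  have hS2_tile : IsDyckTile (strip f (c + 1) b) := by
    apply strip_tile _ _ _ hcb (by omega)
    · intro x h1 h2
      exact H.step x (by omega) (by omega)
    · intro x h1 h2
      have := b3 x (by omega) h2
      omega
  set S := strip f (i + 1) c with hS
  set S2 := strip f (c + 1) b with hS2
  set E := strip (lower f i) i b with hE
  have hboxE : (i, i - 1) ∈ E := (hEmem _).2 (Or.inl rfl)
  have hboxf : (i, i - 1) ∉ reg N f := by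
    intro h
    have := H.col h
    dsimp only at this
    omega
  have hS2_reg : ∀ p ∈ S2, p ∈ reg N f := by
    intro p hp
    have := (reg_lower H hi p).1 (hE_reg p ((hEmem p).2 (Or.inr (Or.inr hp))))
    rcases this with rfl | h
    · rw [hS2, mem_strip] at hp
      dsimp only at hp
      omega
    · exact h
  have hSS2 : ∀ p, p ∈ S → p ∉ S2 := by
    intro p h1 h2
    rw [hS, mem_strip] at h1
    rw [hS2, mem_strip] at h2
    omega
  have hSne : (i + 1, f (i + 1) + 1) ∈ S := (mem_strip ..).2 ⟨le_refl _, hc.1, rfl⟩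
  have hS2ne : (c + 1, f (c + 1) + 1) ∈ S2 := (mem_strip ..).2 ⟨le_refl _, hcb, rfl⟩
  constructor
  · rintro ⟨hS2R, hSR', h1, h2, h3, h4⟩
    have hSR : S ∉ R := fun h => hSR' (Finset.mem_insert_of_mem h)
    have hRT : ∀ d ∈ R, d ∈ insert S (insert S2 R) := fun d hd =>
      Finset.mem_insert_of_mem (Finset.mem_insert_of_mem hd)
    have hST : S ∈ insert S (insert S2 R) := Finset.mem_insert_self _ _
    have hS2T : S2 ∈ insert S (insert S2 R) :=
      Finset.mem_insert_of_mem (Finset.mem_insert_self _ _)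
    have hER : E ∉ R := fun h => hboxf (h2 E (hRT E h) _ hboxE)
    have hdisj : ∀ d ∈ R, ∀ p ∈ d, p ∉ E := by
      intro d hd p hp hpE
      have hr := h2 d (hRT d hd) p hp
      rcases (hEmem p).1 hpE with rfl | h | h
      · exact hboxf hr
      · exact hSR ((h3 p hr).unique ⟨hRT d hd, hp⟩ ⟨hST, h⟩ ▸ hd)
      · exact hS2R ((h3 p hr).unique ⟨hRT d hd, hp⟩ ⟨hS2T, h⟩ ▸ hd)
    refine ⟨hER, ?_, ?_, ?_, ?_⟩
    · intro d hd
      rcases Finset.mem_insert.1 hd with rfl | h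
      · exact hE_tile
      · exact h1 d (hRT d h)
    · intro d hd p hp
      rcases Finset.mem_insert.1 hd with rfl | h
      · exact hE_reg p hp
      · exact (reg_lower H hi p).2 (Or.inr (h2 d (hRT d h) p hp))
    · intro p hp
      by_cases hpE : p ∈ E
      · refine ⟨E, ⟨Finset.mem_insert_self _ _, hpE⟩, ?_⟩
        rintro e ⟨he, hpe⟩
        rcases Finset.mem_insert.1 he with rfl | h
        · rfl
        · exact absurd hpE (hdisj e h p hpe)
      · have hpf : p ∈ reg N f := by
          rcases (reg_lower H hi p).1 hp with rfl | h
          · exact absurd hboxE hpE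
          · exact h
        obtain ⟨d, ⟨hd, hpd⟩, hun⟩ := h3 p hpf
        have hdR : d ∈ R := by
          rcases Finset.mem_insert.1 hd with rfl | h
          · exact absurd ((hEmem p).2 (Or.inr (Or.inl hpd))) hpE
          · rcases Finset.mem_insert.1 h with rfl | h
            · exact absurd ((hEmem p).2 (Or.inr (Or.inr hpd))) hpE
            · exact h
        refine ⟨d, ⟨Finset.mem_insert_of_mem hdR, hpd⟩, ?_⟩
        rintro e ⟨he, hpe⟩
        rcases Finset.mem_insert.1 he with rfl | h
        · exact absurd hpe hpE
        · exact hun e ⟨hRT e h, hpe⟩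
    · intro d hd
      rcases Finset.mem_insert.1 hd with rfl | hd
      · left
        intro p hp
        have := (mem_strip ..).1 hp
        omega
      · rcases h4 d (hRT d hd) with h | ⟨d', hd', h⟩
        · left
          intro p hp
          have := H.col (h2 d (hRT d hd) p hp)
          rw [lower_ne _ _ _ (by omega)]
          exact h p hp
        · right
          rcases Finset.mem_insert.1 hd' with rfl | h'
          · exact ⟨E, Finset.mem_insert_self _ _, fun p hp => (hEmem _).2 (Or.inr (Or.inl (h p hp)))⟩
          · rcases Finset.mem_insert.1 h' with rfl | h'
            · exact ⟨E, Finset.mem_insert_self _ _, fun p hp => (hEmem _).2 (Or.inr (Or.inr (h p hp)))⟩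
            · exact ⟨d', Finset.mem_insert_of_mem h', h⟩
  · rintro ⟨hER, h1, h2, h3, h4⟩
    have hRT : ∀ d ∈ R, d ∈ insert E R := fun d hd => Finset.mem_insert_of_mem hd
    have hET : E ∈ insert E R := Finset.mem_insert_self _ _
    have hdisj : ∀ d ∈ R, ∀ p ∈ d, p ∉ E := by
      intro d hd p hp hpE
      exact hER ((h3 p (hE_reg p hpE)).unique ⟨hRT d hd, hp⟩ ⟨hET, hpE⟩ ▸ hd)
    have hRreg : ∀ d ∈ R, ∀ p ∈ d, p ∈ reg N f := by
      intro d hd p hp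
      rcases (reg_lower H hi p).1 (h2 d (hRT d hd) p hp) with rfl | h
      · exact absurd hboxE (hdisj d hd _ hp)
      · exact h
    have hS2R : S2 ∉ R := fun h => hdisj S2 h _ hS2ne ((hEmem _).2 (Or.inr (Or.inr hS2ne)))
    have hSR : S ∉ R := fun h => hdisj S h _ hSne ((hEmem _).2 (Or.inr (Or.inl hSne)))
    have hSneq : S ≠ S2 := fun h => hSS2 _ hSne (h ▸ hSne)
    refine ⟨hS2R, ?_, ?_, ?_, ?_, ?_⟩
    · intro h
      rcases Finset.mem_insert.1 h with h | h
      · exact hSneq h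
      · exact hSR h
    · intro d hd
      rcases Finset.mem_insert.1 hd with rfl | h
      · exact hS_tile
      · rcases Finset.mem_insert.1 h with rfl | h
        · exact hS2_tile
        · exact h1 d (hRT d h)
    · intro d hd p hp
      rcases Finset.mem_insert.1 hd with rfl | h
      · exact hS_reg p hp
      · rcases Finset.mem_insert.1 h with rfl | h
        · exact hS2_reg p hp
        · exact hRreg d h p hp
    · intro p hp
      obtain ⟨d, ⟨hd, hpd⟩, hun⟩ := h3 p ((reg_lower H hi p).2 (Or.inr hp))
      rcases Finset.mem_insert.1 hd with rfl | hdR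
      · have hnR : ∀ e ∈ R, p ∉ e := fun e he hpe => hdisj e he p hpe hpd
        rcases (hEmem p).1 hpd with rfl | h | h
        · exact absurd hp hboxf
        · refine ⟨S, ⟨Finset.mem_insert_self _ _, h⟩, ?_⟩
          rintro e ⟨he, hpe⟩
          rcases Finset.mem_insert.1 he with rfl | he
          · rfl
          · rcases Finset.mem_insert.1 he with rfl | he
            · exact absurd hpe (hSS2 p h)
            · exact absurd hpe (hnR e he)
        · refine ⟨S2, ⟨Finset.mem_insert_of_mem (Finset.mem_insert_self _ _), h⟩, ?_⟩
          rintro e ⟨he, hpe⟩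
          rcases Finset.mem_insert.1 he with rfl | he
          · exact absurd h (hSS2 p hpe)
          · rcases Finset.mem_insert.1 he with rfl | he
            · rfl
            · exact absurd hpe (hnR e he)
      · have hpE : p ∉ E := hdisj d hdR p hpd
        refine ⟨d, ⟨Finset.mem_insert_of_mem (Finset.mem_insert_of_mem hdR), hpd⟩, ?_⟩
        rintro e ⟨he, hpe⟩
        rcases Finset.mem_insert.1 he with rfl | he
        · exact absurd ((hEmem p).2 (Or.inr (Or.inl hpe))) hpE
        · rcases Finset.mem_insert.1 he with rfl | he
          · exact absurd ((hEmem p).2 (Or.inr (Or.inr hpe))) hpE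
          · exact hun e ⟨hRT e he, hpe⟩
    · intro d hd
      rcases Finset.mem_insert.1 hd with rfl | hd
      · left
        intro p hp
        have := (mem_strip ..).1 hp
        omega
      rcases Finset.mem_insert.1 hd with rfl | hd
      · left
        intro p hp
        have := (mem_strip ..).1 hp
        omega
      rcases h4 d (hRT d hd) with h | ⟨d', hd', h⟩
      · left
        intro p hp
        have := H.col (hRreg d hd p hp)
        have h' := h p hp
        rw [lower_ne _ _ _ (by omega)] at h'
        exact h'
      · right
        rcases Finset.mem_insert.1 hd' with rfl | h'
        · obtain ⟨a, b', φ, hab, he, hs, hm, hmem⟩ := (tile_iff d).1 (h1 d (hRT d hd))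
          have ha := H.col (hRreg d hd (a, φ a) ((hmem _).2 ⟨le_refl _, hab, rfl⟩))
          dsimp only at ha
          have hval : ∀ x, a ≤ x → x ≤ b' → x ≤ b ∧ φ x = f x + 3 := by
            intro x hx hx'
            have hp : (x, φ x) ∈ d := (hmem _).2 ⟨hx, hx', rfl⟩
            have := (mem_strip ..).1 (h _ hp)
            dsimp only at this
            rw [lower_ne _ _ _ (by omega)] at this
            omega
          by_cases hac : a ≤ c
          · have hbc : b' ≤ c := by
              by_contra hbc
              have e1 := (hval a (le_refl _) hab).2
              have e2 := (hval (c + 1) (by omega) (by omega)).2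
              have e3 := hm (c + 1) (by omega) (by omega)
              have := hc4 a ha hac
              omega
            refine ⟨S, Finset.mem_insert_self _ _, ?_⟩
            intro p hp
            have hp' := (hmem _).1 hp
            have e := hval p.1 hp'.1 hp'.2.1
            refine (mem_strip ..).2 ⟨by dsimp only; omega, by dsimp only; omega, by dsimp only; omega⟩
          · refine ⟨S2, Finset.mem_insert_of_mem (Finset.mem_insert_self _ _), ?_⟩
            intro p hp
            have hp' := (hmem _).1 hp
            have e := hval p.1 hp'.1 hp'.2.1
            refine (mem_strip ..).2 ⟨by dsimp only; omega, by dsimp only; omega, by dsimp only; omega⟩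
        · exact ⟨d', Finset.mem_insert_of_mem (Finset.mem_insert_of_mem h'), h⟩

/-- The second tile, when the first one is followed by a down step. -/
lemma second {N : ℕ} {f : ℤ → ℤ} {i c : ℤ} (H : Good N f i) (hi : 1 ≤ i) (hc : FT N f i c)
    (hdn : f (c + 1) = f c - 1) {T : Finset (Finset (ℤ × ℤ))} (hT : IsCI N f T)
    (hST : strip f (i + 1) c ∈ T) :
    ∃! b, (FT N (lower f i) (i - 1) b ∧ i < b) ∧ strip f (c + 1) b ∈ T := by
  obtain ⟨c1, c2, c3, c4⟩ := id hc
  have hl := H.lip (i + 1) c (by have := H.i0; omega) c1 (by omega)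
  have hmem : (c + 1, f (c + 1) + 1) ∈ reg N f := by
    have := H.par (c + 1)
    rw [Int.even_iff] at this
    refine ⟨by dsimp only; omega, by dsimp only; omega, ?_, by dsimp only; omega, ?_⟩
    · rw [Int.odd_iff]; dsimp only; omega
    · rw [lt_min_iff]; dsimp only; omega
  obtain ⟨d, ⟨hd, hm⟩, hu⟩ := hT.2.2.1 _ hmem
  obtain ⟨a, b, h1, h2, h3, h4, rfl⟩ := bottom_tile hT hd hm
  have hac : a = c + 1 := by
    by_contra hne
    have hcS : (c, f c + 1) ∈ strip f (i + 1) c := (mem_strip ..).2 ⟨c1, le_refl _, rfl⟩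
    have hcd : (c, f c + 1) ∈ strip f a b :=
      (mem_strip ..).2 ⟨by dsimp only; omega, by dsimp only; omega, rfl⟩
    have := (hT.2.2.1 _ (hT.2.1 _ hST _ hcS)).unique ⟨hST, hcS⟩ ⟨hd, hcd⟩
    rw [← this, mem_strip] at hm
    dsimp only at hm
    omega
  subst hac
  have hb := (hT.2.1 _ hd (b, f b + 1) ((mem_strip ..).2 ⟨by dsimp only; omega, le_refl _, rfl⟩)).2.2.2.2
  dsimp only at hb
  rw [lt_min_iff] at hb
  refine ⟨b, ⟨⟨⟨by omega, by omega, ?_, ?_⟩, by omega⟩, hd⟩, ?_⟩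
  · rw [lower_ne _ _ _ (by omega)]; omega
  · intro x hx hx'
    by_cases e : x = i
    · subst e; rw [lower_self]; omega
    · rw [lower_ne _ _ _ e]
      by_cases hxc : x ≤ c
      · have := c4 x (by omega) hxc
        omega
      · have := h4 x (by omega) hx'
        omega
  · rintro b' ⟨⟨hb', hib'⟩, hbT⟩
    have hcb' := ft_lower_gt hb' hib' hc
    have := hu _ ⟨hbT, (mem_strip ..).2 ⟨le_refl _, hcb', rfl⟩⟩
    exact strip_inj f _ _ _ hcb' h2 this

/-- A down-type first tile is unique. -/
lemma down_unique {N : ℕ} {f : ℤ → ℤ} {i c c' : ℤ} (hc : FT N f i c)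
    (hdn : f (c + 1) = f c - 1) (hc' : FT N f i c') (hdn' : f (c' + 1) = f c' - 1) : c = c' := by
  obtain ⟨c1, c2, c3, c4⟩ := hc
  obtain ⟨d1, d2, d3, d4⟩ := hc'
  by_contra hne
  rcases lt_or_gt_of_ne hne with h | h
  · have := d4 (c + 1) (by omega) (by omega)
    omega
  · have := c4 (c' + 1) (by omega) (by omega)
    omega

/-- If the lowered path has a long first tile, there is a down-type first tile. -/
lemma down_exists {N : ℕ} {f : ℤ → ℤ} {i b : ℤ} (H : Good N f i) 
    (hb : FT N (lower f i) (i - 1) b) (hib : i < b) : ∃ c, FT N f i c ∧ f (c + 1) = f c - 1 := by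
  obtain ⟨b1, b2, b3⟩ := ft_lower_data hb hib
  have hi := H.i0
  have hdn := H.down
  by_contra hcon
  push Not at hcon
  have key : ∀ y, i + 1 ≤ y → y ≤ b → ∀ x, i + 1 ≤ x → x ≤ y → i - 1 ≤ f x := by
    intro y hy
    induction y, hy using Int.leInduction with
    | base => intro _ x h1 h2; obtain rfl : x = i + 1 := by omega
              omega
    | succ m hm ih =>
      intro hmb x h1 h2
      by_cases e : x = m + 1
      · subst e
        have h3 := ih (by omega) m hm (le_refl _)
        have h5 := H.step m (by omega) (by omega)
        by_contra hlt
        refine hcon m ⟨hm, by omega, by omega, ih (by omega)⟩ (by omega)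
      · exact ih (by omega) x h1 (by omega)
  have := key b (by omega) (le_refl _) b (by omega) (le_refl _)
  omega

/-! ### Generating functions -/

/-- The weight of a tile. -/
def wt (d : Finset (ℤ × ℤ)) : 𝕂 := qInt (tileHt d) / qInt (tileHt d + 1)

/-- The generating function of a family of sets of tiles. -/
def PS (P : Finset (Finset (ℤ × ℤ)) → Prop) : 𝕂 := ∑ᶠ R ∈ {R | P R}, ∏ d ∈ R, wt d

lemma PS_congr {P Q : Finset (Finset (ℤ × ℤ)) → Prop} (h : ∀ R, P R ↔ Q R) : PS P = PS Q := by
  have : P = Q := funext fun R => propext (h R)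
  rw [this]

lemma ZA_eq (n : ℕ) (μ : List Bool) : ZA n μ = PS (IsCI n (pht μ)) := rfl

lemma reg_finite (N : ℕ) (f : ℤ → ℤ) : (reg N f).Finite := by
  apply Set.Finite.subset (Finset.finite_toSet ((Finset.Icc (1 : ℤ) (2 * N - 1)).biUnion
    fun x => (Finset.Ioo (f x) x).image fun y => (x, y)))
  rintro ⟨x, y⟩ ⟨h1, h2, h3, h4, h5⟩
  have := lt_min_iff.1 h5
  simp only [Finset.coe_biUnion, Set.mem_iUnion, Finset.mem_coe, Finset.mem_image, Finset.mem_Icc,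
    Finset.mem_Ioo]
  exact ⟨x, ⟨h1, h2⟩, y, ⟨h4, this.1⟩, rfl⟩

lemma ci_finite (N : ℕ) (f : ℤ → ℤ) : {T | IsCI N f T}.Finite := by
  apply Set.Finite.subset (Finset.finite_toSet ((reg_finite N f).toFinset.powerset.powerset))
  intro T hT
  rw [Finset.mem_coe, Finset.mem_powerset]
  intro d hd
  rw [Finset.mem_powerset]
  intro p hp
  rw [Set.Finite.mem_toFinset]
  exact hT.2.1 d hd p hp

lemma insert_finite {P : Finset (Finset (ℤ × ℤ)) → Prop} (hP : {T | P T}.Finite)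
    (S : Finset (ℤ × ℤ)) : {R | S ∉ R ∧ P (insert S R)}.Finite := by
  apply Set.Finite.subset (hP.image fun T => T.erase S)
  rintro R ⟨h1, h2⟩
  exact ⟨insert S R, h2, Finset.erase_insert h1⟩

lemma fiber {ι : Type} {P : Finset (Finset (ℤ × ℤ)) → Prop} (hP : {T | P T}.Finite)
    (J : Finset ι) (E : ι → Finset (ℤ × ℤ)) (h : ∀ T, P T → ∃! b, b ∈ J ∧ E b ∈ T) :
    PS P = ∑ b ∈ J, wt (E b) * PS (fun R => E b ∉ R ∧ P (insert (E b) R)) := by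
  have e1 : PS P = ∑ T ∈ hP.toFinset, ∏ d ∈ T, wt d := finsum_mem_eq_finite_toFinset_sum _ hP
  have e2 : ∀ b, PS (fun R => E b ∉ R ∧ P (insert (E b) R)) =
      ∑ R ∈ (insert_finite hP (E b)).toFinset, ∏ d ∈ R, wt d := fun b =>
    finsum_mem_eq_finite_toFinset_sum _ _
  have e3 : ∀ T ∈ hP.toFinset, ∏ d ∈ T, wt d =
      ∑ b ∈ J, if E b ∈ T then ∏ d ∈ T, wt d else 0 := by
    intro T hT
    rw [Set.Finite.mem_toFinset] at hT
    obtain ⟨b, ⟨hb, hbT⟩, hu⟩ := h T hT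
    rw [Finset.sum_eq_single_of_mem b hb, if_pos hbT]
    intro b' hb' hne
    rw [if_neg]
    intro hc
    exact hne (hu b' ⟨hb', hc⟩)
  rw [e1, Finset.sum_congr rfl e3, Finset.sum_comm]
  refine Finset.sum_congr rfl fun b _ => ?_
  rw [e2, ← Finset.sum_filter, Finset.mul_sum]
  refine Finset.sum_bij' (fun T _ => T.erase (E b)) (fun R _ => insert (E b) R) ?_ ?_ ?_ ?_ ?_
  · intro T hT
    rw [Finset.mem_filter, Set.Finite.mem_toFinset] at hT
    rw [Set.Finite.mem_toFinset]
    refine ⟨Finset.notMem_erase _ _, ?_⟩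
    rw [Finset.insert_erase hT.2]
    exact hT.1
  · intro R hR
    rw [Set.Finite.mem_toFinset] at hR
    rw [Finset.mem_filter, Set.Finite.mem_toFinset]
    exact ⟨hR.2, Finset.mem_insert_self _ _⟩
  · intro T hT
    rw [Finset.mem_filter] at hT
    exact Finset.insert_erase hT.2
  · intro R hR
    rw [Set.Finite.mem_toFinset] at hR
    exact Finset.erase_insert hR.1
  · intro T hT
    rw [Finset.mem_filter] at hT
    exact (Finset.mul_prod_erase T wt hT.2).symm

/-- The finite set of possible right ends of the first tile. -/
def FTset (N : ℕ) (f : ℤ → ℤ) (i : ℤ) : Finset ℤ :=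
  (Finset.Icc 0 (2 * (N : ℤ))).filter fun c => FT N f i c

lemma mem_FTset {N : ℕ} {f : ℤ → ℤ} {i : ℤ} (hi : 0 ≤ i) (c : ℤ) :
    c ∈ FTset N f i ↔ FT N f i c := by
  unfold FTset
  rw [Finset.mem_filter, Finset.mem_Icc]
  constructor
  · exact fun h => h.2
  · intro h
    have h1 := h.1
    have h2 := h.2.1
    exact ⟨⟨by omega, by omega⟩, h⟩

lemma Good.first_sum {N : ℕ} {f : ℤ → ℤ} {i : ℤ} (H : Good N f i) :
    PS (IsCI N f) = ∑ c ∈ FTset N f i, (qInt i / qInt (i + 1)) *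
      PS (fun R => strip f (i + 1) c ∉ R ∧ IsCI N f (insert (strip f (i + 1) c) R)) := by
  rw [fiber (ci_finite N f) (FTset N f i) (fun c => strip f (i + 1) c)]
  · refine Finset.sum_congr rfl fun c hc => ?_
    rw [mem_FTset H.i0] at hc
    rw [wt, H.ft_ht hc]
  · intro T hT
    simp only [mem_FTset H.i0]
    exact H.first hT

lemma qA_val (n : ℤ) : RatFunc.inftyValuation ℂ (qA ^ n) = WithZero.exp n := by
  rw [qA, map_zpow₀, RatFunc.inftyValuation.X, ← WithZero.exp_zsmul]
  simp

lemma qA_ne : qA ≠ 0 := RatFunc.X_ne_zero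

lemma qInt_num_ne {n : ℤ} (hn : 1 ≤ n) : qA ^ n - qA⁻¹ ^ n ≠ 0 := by
  intro h
  have h1 : qA ^ n = qA ^ (-n) := by
    rw [zpow_neg, ← inv_zpow]; exact sub_eq_zero.1 h
  have h2 := congrArg (RatFunc.inftyValuation ℂ) h1
  rw [qA_val, qA_val, WithZero.exp_inj] at h2
  omega

lemma qInt_den_ne : qA - qA⁻¹ ≠ 0 := by
  simpa using qInt_num_ne (n := 1) (le_refl _)

lemma qInt_ne {n : ℤ} (hn : 1 ≤ n) : qInt n ≠ 0 := div_ne_zero (qInt_num_ne hn) qInt_den_ne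

lemma qInt_zero : qInt 0 = 0 := by simp [qInt]

lemma qInt_rec (i : ℤ) : qInt 2 * qInt i = qInt (i + 1) + qInt (i - 1) := by
  have h0 := qA_ne
  have hd := qInt_den_ne
  have h2 : qInt 2 = qA + qA⁻¹ := by
    rw [qInt, div_eq_iff hd, zpow_two, zpow_two]
    ring
  rw [h2]
  unfold qInt
  rw [← add_div, ← mul_div_assoc]
  congr 1
  simp only [inv_zpow']
  rw [neg_add, neg_sub, zpow_add₀ h0, zpow_sub₀ h0, zpow_add₀ h0, sub_eq_add_neg (1 : ℤ), zpow_add₀ h0]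
  simp only [zpow_neg, zpow_one]
  field_simp
  ring

lemma qInt_two_val : RatFunc.inftyValuation ℂ (qInt 2) = WithZero.exp 1 := by
  have h2 : qInt 2 = qA ^ (1 : ℤ) + qA ^ (-1 : ℤ) := by
    rw [qInt, div_eq_iff qInt_den_ne, zpow_two, zpow_two, zpow_one, zpow_neg_one]
    ring
  rw [h2, Valuation.map_add_eq_of_lt_left, qA_val]
  rw [qA_val, qA_val, WithZero.exp_lt_exp]
  norm_num

/-- The fundamental relation. -/
lemma main_rel {N : ℕ} {f : ℤ → ℤ} {i : ℤ} (H : Good N f i) (hi : 1 ≤ i) :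
    qInt 2 * PS (IsCI N f) = PS (IsCI N (lower f i)) +
      ∑ c ∈ (FTset N f i).filter (fun c => f (c + 1) = f c + 1),
        PS (IsCI N (raise f (i + 1) c)) := by
  have H' := H.lower hi
  have q0 := qInt_ne hi
  have q1 := qInt_ne (n := i + 1) (by omega)
  have key1 : PS (IsCI N (lower f i)) = (qInt (i - 1) / qInt i) * PS (IsCI N f) +
      ∑ b ∈ (FTset N (lower f i) (i - 1)).filter (fun b => i < b), (qInt (i - 1) / qInt i) *
      PS (fun R => strip (lower f i) i b ∉ R ∧
        IsCI N (lower f i) (insert (strip (lower f i) i b) R)) := by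
    rw [H'.first_sum, ← Finset.sum_filter_add_sum_filter_not _ (fun b => i < b), add_comm]
    simp only [sub_add_cancel]
    congr 1
    have hFT : FT N (lower f i) (i - 1) i := by
      have := H.iN
      refine ⟨by omega, by omega, by rw [lower_self]; ring, ?_⟩
      intro x h1 h2
      obtain rfl : x = i := by omega
      rw [lower_self]; omega
    have : (FTset N (lower f i) (i - 1)).filter (fun b => ¬ i < b) = {i} := by
      ext b
      rw [Finset.mem_filter, mem_FTset (by omega), Finset.mem_singleton]
      constructor
      · rintro ⟨h, h'⟩
        have := h.1
        omega
      · rintro rfl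
        exact ⟨hFT, lt_irrefl _⟩
    rw [this, Finset.sum_singleton]
    congr 1
    apply PS_congr
    intro R
    have := up_iff H' hFT (by rw [lower_ne _ _ _ (by omega), lower_self, H.down]; ring) R
    rw [sub_add_cancel, raise_lower H] at this
    exact this
  have key2 : ∀ c ∈ (FTset N f i).filter (fun c => f (c + 1) = f c + 1),
      PS (fun R => strip f (i + 1) c ∉ R ∧ IsCI N f (insert (strip f (i + 1) c) R)) =
      PS (IsCI N (raise f (i + 1) c)) := by
    intro c hc
    rw [Finset.mem_filter, mem_FTset H.i0] at hc
    exact PS_congr fun R => up_iff H hc.1 hc.2 R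
  have hnot : ∀ c, FT N f i c → ¬ f (c + 1) = f c + 1 → f (c + 1) = f c - 1 := by
    intro c hc h
    have h1 := hc.1
    have h2 := hc.2.1
    have := H.step c (by omega) (by omega)
    tauto
  have key3 : ∑ c ∈ (FTset N f i).filter (fun c => ¬ f (c + 1) = f c + 1),
      PS (fun R => strip f (i + 1) c ∉ R ∧ IsCI N f (insert (strip f (i + 1) c) R)) =
      ∑ b ∈ (FTset N (lower f i) (i - 1)).filter (fun b => i < b), (qInt (i - 1) / qInt i) *
      PS (fun R => strip (lower f i) i b ∉ R ∧
        IsCI N (lower f i) (insert (strip (lower f i) i b) R)) := by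
    by_cases hex : ∃ c, FT N f i c ∧ f (c + 1) = f c - 1
    · obtain ⟨c, hc, hdn⟩ := hex
      have : (FTset N f i).filter (fun c => ¬ f (c + 1) = f c + 1) = {c} := by
        ext b
        rw [Finset.mem_filter, mem_FTset (by omega), Finset.mem_singleton]
        constructor
        · rintro ⟨h, h'⟩
          exact down_unique h (hnot b h h') hc hdn
        · rintro rfl
          exact ⟨hc, by omega⟩
      rw [this, Finset.sum_singleton, fiber (insert_finite (ci_finite N f) _)
        ((FTset N (lower f i) (i - 1)).filter (fun b => i < b)) (fun b => strip f (c + 1) b)]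
      · refine Finset.sum_congr rfl fun b hb => ?_
        rw [Finset.mem_filter, mem_FTset (by omega)] at hb
        congr 1
        · have hb' := ft_lower_data hb.1 hb.2
          have hcb := ft_lower_gt hb.1 hb.2 hc
          have hc3 := hc.2.2.1
          have hc1 := hc.1
          rw [wt, strip_ht _ _ _ hcb]
          · rw [hdn, hc3]
            congr 2 <;> ring
          · intro x h1 h2
            have := hb'.2.2 x (by omega) h2
            omega
        · exact PS_congr fun R => down_iff H hi hc hdn hb.1 hb.2 R
      · rintro T ⟨hST, hT⟩
        obtain ⟨b, ⟨hb, hbT⟩, hu⟩ := second H hi hc hdn hT (Finset.mem_insert_self _ _)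
        simp only [Finset.mem_filter, mem_FTset (show 0 ≤ i - 1 by omega)]
        refine ⟨b, ⟨hb, ?_⟩, ?_⟩
        · rcases Finset.mem_insert.1 hbT with h | h
          · exfalso
            have hcb := ft_lower_gt hb.1 hb.2 hc
            have h1 : (c + 1, f (c + 1) + 1) ∈ strip f (c + 1) b :=
              (mem_strip ..).2 ⟨le_refl _, hcb, rfl⟩
            rw [h, mem_strip] at h1
            dsimp only at h1
            omega
          · exact h
        · rintro b' ⟨h1, h2⟩
          exact hu b' ⟨h1, Finset.mem_insert_of_mem h2⟩
    · rw [Finset.sum_eq_zero, Finset.sum_eq_zero]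
      · intro b hb
        rw [Finset.mem_filter, mem_FTset (by omega)] at hb
        exact absurd (down_exists H hb.1 hb.2) hex
      · intro c hc
        rw [Finset.mem_filter, mem_FTset (by omega)] at hc
        exact absurd ⟨c, hc.1, hnot c hc.1 hc.2⟩ hex
  have key4 : PS (IsCI N f) = (qInt i / qInt (i + 1)) *
      (∑ c ∈ (FTset N f i).filter (fun c => f (c + 1) = f c + 1),
        PS (IsCI N (raise f (i + 1) c)) + 
      ∑ b ∈ (FTset N (lower f i) (i - 1)).filter (fun b => i < b), (qInt (i - 1) / qInt i) *
      PS (fun R => strip (lower f i) i b ∉ R ∧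
        IsCI N (lower f i) (insert (strip (lower f i) i b) R))) := by
    rw [← key3, ← Finset.sum_congr rfl key2, Finset.sum_filter_add_sum_filter_not, Finset.mul_sum]
    exact H.first_sum
  rw [key1, add_assoc]
  have q2 : qInt 2 = qInt (i - 1) / qInt i + qInt (i + 1) / qInt i := by
    rw [← add_div, eq_div_iff q0, qInt_rec, add_comm]
  rw [q2, add_mul]
  congr 1
  nth_rewrite 1 [key4]
  rw [← mul_assoc, div_mul_div_cancel₀ q0, div_self q1, one_mul, add_comm]

/-- A tiling generating function vanishes when the path starts with a down step. -/
lemma zero_rel {N : ℕ} {f : ℤ → ℤ} (H : Good N f 0) : PS (IsCI N f) = 0 := by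
  rw [H.first_sum]
  simp [qInt_zero]

/-! ### Lists -/

/-- Height of a path at a natural abscissa. -/
def hN (w : List Bool) (k : ℕ) : ℤ := 2 * ((w.take k).count true : ℤ) - k

lemma pht_eq (w : List Bool) (x : ℤ) (hx : 0 ≤ x) : pht w x = hN w x.toNat := by
  unfold pht hN
  have : ((x.toNat : ℕ) : ℤ) = x := by omega
  rw [this]

lemma pht_nat (w : List Bool) (k : ℕ) : pht w (k : ℤ) = hN w k := by
  rw [pht_eq _ _ (by omega)]; simp

lemma pht_neg (w : List Bool) (x : ℤ) (hx : x < 0) : pht w x = - x := by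
  unfold pht
  have : x.toNat = 0 := by omega
  simp [this]

lemma hN_zero (w : List Bool) : hN w 0 = 0 := by simp [hN]

lemma hN_nil (k : ℕ) : hN [] k = -k := by simp [hN]

lemma hN_cons (b : Bool) (w : List Bool) (k : ℕ) :
    hN (b :: w) (k + 1) = (if b = true then 1 else -1) + hN w k := by
  cases b <;> simp [hN] <;> ring

lemma hN_step (w : List Bool) : ∀ k, hN w (k + 1) = hN w k + (if w[k]? = some true then 1 else -1) := by
  induction w with
  | nil => intro k; simp [hN_nil]; ring
  | cons b w ih =>
    intro k
    cases k with
    | zero => rw [hN_cons, hN_zero, hN_zero]; cases b <;> simp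
    | succ k =>
      rw [hN_cons, hN_cons, ih k]
      simp only [List.getElem?_cons_succ]
      ring

lemma hN_rep_le (i : ℕ) (w : List Bool) (k : ℕ) (hk : k ≤ i) :
    hN (List.replicate i true ++ w) k = k := by
  induction i generalizing k with
  | zero => obtain rfl : k = 0 := by omega
            simp [hN_zero]
  | succ i ih =>
    cases k with
    | zero => simp [hN_zero]
    | succ k =>
      rw [List.replicate_succ, List.cons_append, hN_cons, ih k (by omega)]
      push_cast
      simp
      ring

lemma hN_rep_add (i : ℕ) (w : List Bool) (k : ℕ) :
    hN (List.replicate i true ++ w) (i + k) = i + hN w k := by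
  induction i with
  | zero => simp
  | succ i ih =>
    rw [List.replicate_succ, List.cons_append, show i + 1 + k = (i + k) + 1 by ring, hN_cons, ih]
    push_cast
    simp
    ring

lemma hN_rep_false (n : ℕ) (k : ℕ) : hN (List.replicate n false) k = -k := by
  simp [hN, List.take_replicate, List.count_replicate]

lemma hN_set (w : List Bool) : ∀ m l, w[m]? = some true →
    hN (w.set m false) l = hN w l - (if m < l then 2 else 0) := by
  induction w with
  | nil => intro m l h; simp at h
  | cons b w ih =>
    intro m l h
    cases l with
    | zero => simp [hN_zero]
    | succ l =>
      cases m with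
      | zero =>
        simp only [List.getElem?_cons_zero, Option.some.injEq] at h
        subst h
        rw [List.set_cons_zero, hN_cons, hN_cons]
        simp
        ring
      | succ m =>
        simp only [List.getElem?_cons_succ] at h
        rw [List.set_cons_succ, hN_cons, hN_cons, ih m l h]
        simp only [Nat.add_lt_add_iff_right]
        ring

lemma hN_full (w : List Bool) : hN w w.length = 2 * (w.count true : ℤ) - w.length := by
  simp [hN]

/-- Sum over all ways to write `w = D U u` (with `D` a Dyck path started at height `h`) of
`F (D R u)`. -/
def rsum : ℕ → List Bool → (List Bool → 𝕂) → 𝕂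
  | _, [], _ => 0
  | 0, false :: _, _ => 0
  | h + 1, false :: w, F => rsum h w (fun v => F (false :: v))
  | h, true :: w, F =>
      (if h = 0 then F (false :: w) else 0) + rsum (h + 1) w (fun v => F (true :: v))

/-- Sum over all peaks of `w`. -/
def psum : List Bool → (ℕ → List Bool → 𝕂) → 𝕂
  | [], _ => 0
  | b :: w, F => (if b = true ∧ w.head? = some false then F 1 w.tail else 0) +
      psum w (fun j v => F (j + 1) (b :: v))

lemma rsum_true (h : ℕ) (w : List Bool) (F : List Bool → 𝕂) : rsum h (true :: w) F =
    (if h = 0 then F (false :: w) else 0) + rsum (h + 1) w (fun v => F (true :: v)) := by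
  cases h <;> rfl

lemma rsum_add (w : List Bool) : ∀ h (F G : List Bool → 𝕂),
    rsum h w (fun v => F v + G v) = rsum h w F + rsum h w G := by
  induction w with
  | nil => intro h F G; simp [rsum]
  | cons b w ih =>
    intro h F G
    cases b
    · cases h
      · simp [rsum]
      · simp only [rsum]; rw [ih]
    · simp only [rsum_true]; rw [ih]; split_ifs <;> ring

lemma rsum_zero (w : List Bool) : ∀ h, rsum h w (fun _ => 0) = 0 := by
  induction w with
  | nil => intro h; simp [rsum]
  | cons b w ih =>
    intro h
    cases b
    · cases h
      · simp [rsum]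
      · simp only [rsum]; rw [ih]
    · simp only [rsum_true]; rw [ih]; simp

lemma rsum_mul (c : 𝕂) (w : List Bool) : ∀ h (F : List Bool → 𝕂),
    rsum h w (fun v => c * F v) = c * rsum h w F := by
  induction w with
  | nil => intro h F; simp [rsum]
  | cons b w ih =>
    intro h F
    cases b
    · cases h
      · simp [rsum]
      · simp only [rsum]; rw [ih]
    · simp only [rsum_true]; rw [ih]; split_ifs <;> ring

lemma psum_add (w : List Bool) : ∀ (F G : ℕ → List Bool → 𝕂),
    psum w (fun j v => F j v + G j v) = psum w F + psum w G := by
  induction w with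
  | nil => intro F G; simp [psum]
  | cons b w ih =>
    intro F G
    simp only [psum]
    rw [ih]; split_ifs <;> ring

lemma psum_mul (c : 𝕂) (w : List Bool) : ∀ (F : ℕ → List Bool → 𝕂),
    psum w (fun j v => c * F j v) = c * psum w F := by
  induction w with
  | nil => intro F; simp [psum]
  | cons b w ih =>
    intro F
    simp only [psum]
    rw [ih]; split_ifs <;> ring

lemma psum_congr (w : List Bool) : ∀ (F G : ℕ → List Bool → 𝕂),
    (∀ j v, 1 ≤ j → v.length + 2 = w.length → v.count true + 1 = w.count true → F j v = G j v) →
    psum w F = psum w G := by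
  induction w with
  | nil => intro F G _; simp [psum]
  | cons b w ih =>
    intro F G h
    simp only [psum]
    rw [ih (fun j v => F (j + 1) (b :: v)) (fun j v => G (j + 1) (b :: v))]
    · congr 1
      split_ifs with hb
      · obtain ⟨rfl, hw⟩ := hb
        cases w with
        | nil => simp at hw
        | cons a w =>
          simp only [List.head?_cons, Option.some.injEq] at hw
          subst hw
          apply h
          · exact le_refl _
          · simp
          · simp
      · rfl
    · intro j v h1 h2 h3
      apply h
      · omega
      · simp; omega
      · cases b <;> simp <;> omega

lemma psum_zero (w : List Bool) : psum w (fun _ _ => 0) = 0 := by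
  have := psum_mul 0 w (fun _ _ => 0)
  simpa using this

lemma psum_comm (w : List Bool) : ∀ h (F : ℕ → List Bool → 𝕂),
    psum w (fun j v => rsum h v (F j)) = rsum h w (fun v => psum v F) := by
  induction w with
  | nil => intro h F; simp [psum, rsum]
  | cons b w ih =>
    intro h F
    cases b
    · cases h
      · simp [psum, rsum, psum_zero]
      · simp only [psum, rsum]
        rw [ih]
        simp
    · simp only [psum, rsum_true]
      rw [psum_add, ih]
      have e1 : psum w (fun j v => if h = 0 then F (j + 1) (false :: v) else 0) =
          if h = 0 then psum w (fun j v => F (j + 1) (false :: v)) else 0 := by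
        split_ifs
        · rfl
        · exact psum_zero w
      rw [e1, rsum_add]
      have e2 : rsum (h + 1) w (fun v => if True ∧ v.head? = some false then F 1 v.tail else 0) =
          if True ∧ w.head? = some false then rsum h w.tail (F 1) else 0 := by
        cases w with
        | nil => simp [rsum]
        | cons a w =>
          cases a
          · simp [rsum]
          · simp [rsum_true, rsum_zero]
      rw [e2]
      simp only [Bool.false_eq_true, false_and, if_false, zero_add]
      ring

lemma rsum_eq (w : List Bool) : ∀ (h : ℕ) (F : List Bool → 𝕂), rsum h w F =
    ∑ m ∈ Finset.range w.length,
      if w[m]? = some true ∧ (h : ℤ) + hN w m = 0 ∧ ∀ l ≤ m, 0 ≤ (h : ℤ) + hN w l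
      then F (w.set m false) else 0 := by
  induction w with
  | nil => intro h F; simp [rsum]
  | cons b w ih =>
    intro h F
    rw [List.length_cons, Finset.sum_range_succ']
    have hall : ∀ (m : ℕ), (∀ l ≤ m + 1, 0 ≤ (h : ℤ) + hN (b :: w) l) ↔
        ∀ l ≤ m, 0 ≤ (h : ℤ) + ((if b = true then 1 else -1) + hN w l) := by
      intro m
      constructor
      · intro H l hl
        have := H (l + 1) (by omega)
        rwa [hN_cons] at this
      · intro H l hl
        cases l with
        | zero => simp [hN_zero]
        | succ l => rw [hN_cons]; exact H l (by omega)
    cases b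
    · cases h with
      | zero =>
        simp only [rsum]
        symm
        rw [Finset.sum_eq_zero]
        · simp
        · intro m _
          rw [if_neg]
          rintro ⟨_, _, h3⟩
          rw [hall] at h3
          have := h3 0 (by omega)
          simp [hN_zero] at this
      | succ h =>
        simp only [rsum]
        rw [ih]
        simp only [List.getElem?_cons_zero, Option.some.injEq, Bool.false_eq_true, false_and, if_false,
          add_zero]
        refine Finset.sum_congr rfl fun m _ => ?_
        refine if_congr ?_ rfl rfl
        rw [hall]
        simp only [List.getElem?_cons_succ, hN_cons, Bool.false_eq_true, if_false]
        have e : ∀ z : ℤ, ((h + 1 : ℕ) : ℤ) + (-1 + z) = h + z := by intro z; push_cast; ring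
        simp only [e]
    · rw [rsum_true, ih, add_comm]
      congr 1
      · refine Finset.sum_congr rfl fun m _ => ?_
        refine if_congr ?_ rfl rfl
        rw [hall]
        simp only [List.getElem?_cons_succ, hN_cons, if_true]
        have e : ∀ z : ℤ, ((h + 1 : ℕ) : ℤ) + z = h + (1 + z) := by intro z; push_cast; ring
        simp only [e]
      · simp [hN_zero]

lemma psum_eq (w : List Bool) : ∀ (F : ℕ → List Bool → 𝕂), psum w F =
    ∑ m ∈ Finset.range w.length,
      if w[m]? = some true ∧ w[m + 1]? = some false
      then F (m + 1) (w.take m ++ w.drop (m + 2)) else 0 := by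
  induction w with
  | nil => intro F; simp [psum]
  | cons b w ih =>
    intro F
    rw [List.length_cons, Finset.sum_range_succ', psum, ih, add_comm]
    congr 1
    cases w <;> simp

lemma peaks_sum (w : List Bool) (n : ℕ) (F : ℕ → List Bool → 𝕂) :
    ∑ j ∈ (peaks w).filter (fun j => j ≤ n + 1), F j (removePeak w j) =
      psum w (fun j v => if j ≤ n + 1 then F j v else 0) := by
  rw [psum_eq, Finset.sum_filter, peaks, Finset.sum_filter]
  symm
  refine Finset.sum_bij (fun m _ => m + 1) ?_ ?_ ?_ ?_
  · intro m hm
    rw [Finset.mem_range] at hm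
    rw [Finset.mem_Icc]
    omega
  · intro a _ b _ h
    omega
  · intro j hj
    rw [Finset.mem_Icc] at hj
    exact ⟨j - 1, by rw [Finset.mem_range]; omega, by omega⟩
  · intro m _
    simp only [Nat.add_sub_cancel, removePeak]

/-! ### The relation for lists -/

lemma good_list {N i : ℕ} {w : List Bool} (hN' : i < N)
    (hl : (List.replicate i true ++ false :: w).length = 2 * N)
    (hc : (List.replicate i true ++ false :: w).count true = N) :
    Good N (pht (List.replicate i true ++ false :: w)) i := by
  refine ⟨by omega, by omega, ?_, ?_, ?_, ?_, ?_⟩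
  · intro x h1 h2
    rw [pht_eq _ _ h1, hN_rep_le _ _ _ (by omega)]
    omega
  · have : ((i : ℤ) + 1) = ((i + 1 : ℕ) : ℤ) := by push_cast; ring
    rw [this, pht_nat, hN_rep_add, hN_cons, hN_zero]
    simp
    ring
  · intro x h1 _
    rw [pht_eq _ _ h1, pht_eq _ _ (by omega), show (x + 1).toNat = x.toNat + 1 by omega, hN_step]
    split_ifs
    · left; rfl
    · right; ring
  · intro x
    unfold pht
    exact ⟨_, by rw [sub_add_cancel, two_mul]⟩
  · have : (2 * (N : ℤ)) = ((2 * N : ℕ) : ℤ) := by push_cast; ring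
    rw [this, pht_nat, ← hl, hN_full, hc, hl]
    push_cast
    ring

lemma pht_lower (k : ℕ) (w : List Bool) :
    pht (List.replicate k true ++ false :: true :: w) =
      lower (pht (List.replicate (k + 1) true ++ false :: w)) ((k + 1 : ℕ) : ℤ) := by
  funext x
  have e : List.replicate (k + 1) true ++ false :: w = List.replicate k true ++ true :: false :: w := by
    rw [List.replicate_succ', List.append_assoc]; rfl
  rw [e]
  by_cases hx : x < 0
  · rw [lower_ne _ _ _ (by omega), pht_neg _ _ hx, pht_neg _ _ hx]
  obtain ⟨m, rfl⟩ : ∃ m : ℕ, x = m := ⟨x.toNat, by omega⟩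
  by_cases h1 : m ≤ k
  · rw [lower_ne _ _ _ (by omega), pht_nat, pht_nat, hN_rep_le _ _ _ h1, hN_rep_le _ _ _ h1]
  obtain ⟨l, rfl⟩ : ∃ l, m = k + (l + 1) := ⟨m - k - 1, by omega⟩
  cases l with
  | zero =>
    rw [show ((k + (0 + 1) : ℕ) : ℤ) = ((k + 1 : ℕ) : ℤ) by simp, lower_self, pht_nat, hN_rep_add,
      hN_cons, hN_zero]
    push_cast
    ring
  | succ l =>
    rw [lower_ne _ _ _ (by omega), pht_nat, pht_nat, hN_rep_add, hN_rep_add, hN_cons, hN_cons,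
      hN_cons, hN_cons]
    simp

lemma pht_raise (i m : ℕ) (w : List Bool) (hm : w[m]? = some true) :
    pht (List.replicate (i + 1) true ++ w.set m false) =
      raise (pht (List.replicate i true ++ false :: w)) ((i : ℤ) + 1) ((i : ℤ) + 1 + m) := by
  funext x
  unfold raise
  by_cases hx : x < 0
  · rw [if_neg (by omega), pht_neg _ _ hx, pht_neg _ _ hx]
  obtain ⟨y, rfl⟩ : ∃ y : ℕ, x = y := ⟨x.toNat, by omega⟩
  by_cases h1 : y ≤ i
  · rw [if_neg (by omega), pht_nat, pht_nat, hN_rep_le _ _ _ h1, hN_rep_le _ _ _ (by omega)]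
  obtain ⟨l, rfl⟩ : ∃ l, y = i + 1 + l := ⟨y - i - 1, by omega⟩
  have e : hN (List.replicate i true ++ false :: w) (i + 1 + l) = i + (-1 + hN w l) := by
    rw [add_assoc, hN_rep_add, add_comm 1 l, hN_cons]
    simp
  rw [pht_nat, pht_nat, e, hN_rep_add, hN_set _ _ _ hm]
  push_cast
  by_cases h2 : m < l
  · rw [if_pos h2, if_neg (by omega)]; ring
  · rw [if_neg h2, if_pos (by omega)]; ring

lemma rel_list {N k : ℕ} {w : List Bool} (hN' : k + 1 < N)
    (hl : (List.replicate (k + 1) true ++ false :: w).length = 2 * N)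
    (hc : (List.replicate (k + 1) true ++ false :: w).count true = N) :
    qInt 2 * ZA N (List.replicate (k + 1) true ++ false :: w) =
      ZA N (List.replicate k true ++ false :: true :: w) +
      rsum 0 w (fun v => ZA N (List.replicate (k + 2) true ++ v)) := by
  have H := good_list hN' hl hc
  have hwl : w.length + k + 2 = 2 * N := by
    simp at hl; omega
  have hstep := hN_step w
  have hval : ∀ l : ℕ, pht (List.replicate (k + 1) true ++ false :: w) (((k + 1 : ℕ) : ℤ) + 1 + l) =
      k + hN w l := by
    intro l
    rw [show (((k + 1 : ℕ) : ℤ) + 1 + l) = (((k + 1) + (l + 1) : ℕ) : ℤ) by push_cast; ring, pht_nat,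
      hN_rep_add, hN_cons]
    push_cast
    simp
  rw [ZA_eq, ZA_eq, main_rel H (by omega), pht_lower]
  congr 1
  rw [rsum_eq, ← Finset.sum_filter]
  symm
  refine Finset.sum_bij (fun (m : ℕ) _ => (((k + 1 : ℕ) : ℤ) + 1 + m)) ?_ ?_ ?_ ?_
  · intro m hm
    rw [Finset.mem_filter, Finset.mem_range] at hm
    obtain ⟨hm1, hm2, hm3, hm4⟩ := hm
    have hs := hstep m
    rw [if_pos hm2] at hs
    have hv := hval m
    have hv' := hval (m + 1)
    rw [show (((k + 1 : ℕ) : ℤ) + 1 + (m + 1 : ℕ)) = ((k + 1 : ℕ) : ℤ) + 1 + m + 1 by push_cast; ring] at hv'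
    have hlip := H.lip (((k + 1 : ℕ) : ℤ) + 1 + m + 1) (2 * N) (by omega) (by omega) (by omega)
    have hlast := H.last
    rw [Finset.mem_filter, mem_FTset (by omega)]
    refine ⟨⟨by omega, by omega, by omega, ?_⟩, by omega⟩
    intro x hx hx'
    obtain ⟨l, rfl⟩ : ∃ l : ℕ, x = ((k + 1 : ℕ) : ℤ) + 1 + l := ⟨(x - (k + 2)).toNat, by omega⟩
    rw [hval]
    have := hm4 l (by omega)
    omega
  · intro a _ b _ h
    omega
  · intro c hcc
    rw [Finset.mem_filter, mem_FTset (by omega)] at hcc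
    obtain ⟨⟨c1, c2, c3, c4⟩, c5⟩ := hcc
    obtain ⟨m, rfl⟩ : ∃ l : ℕ, c = ((k + 1 : ℕ) : ℤ) + 1 + l := ⟨(c - (k + 2)).toNat, by omega⟩
    refine ⟨m, ?_, rfl⟩
    have hv := hval m
    have hv' := hval (m + 1)
    rw [show (((k + 1 : ℕ) : ℤ) + 1 + (m + 1 : ℕ)) = ((k + 1 : ℕ) : ℤ) + 1 + m + 1 by push_cast; ring] at hv'
    have hs := hstep m
    have hm : w[m]? = some true := by
      by_contra hne
      rw [if_neg hne] at hs
      omega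
    have hml : m < w.length := by
      by_contra hge
      rw [List.getElem?_eq_none (by omega)] at hm
      simp at hm
    rw [Finset.mem_filter, Finset.mem_range]
    refine ⟨hml, hm, by push_cast at *; omega, ?_⟩
    intro l hl'
    have := c4 (((k + 1 : ℕ) : ℤ) + 1 + l) (by omega) (by omega)
    rw [hval] at this
    push_cast at *
    omega
  · intro m hm
    rw [Finset.mem_filter] at hm
    rw [ZA_eq, pht_raise _ _ _ hm.2.1]

lemma zero_list {N : ℕ} {w : List Bool} (hN' : 0 < N) (hl : (false :: w).length = 2 * N)
    (hc : (false :: w).count true = N) : ZA N (false :: w) = 0 := by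
  have := good_list (i := 0) hN' (by simpa using hl) (by simpa using hc)
  exact zero_rel this

lemma ZA_top (n : ℕ) : ZA n (List.replicate n true ++ List.replicate n false) = 1 := by
  rw [ZA_eq]
  have hreg : ∀ p, p ∉ reg n (pht (List.replicate n true ++ List.replicate n false)) := by
    rintro ⟨x, y⟩ ⟨h1, h2, h3, h4, h5⟩
    dsimp only at *
    rw [lt_min_iff] at h5
    obtain ⟨z, rfl⟩ : ∃ z : ℕ, x = z := ⟨x.toNat, by omega⟩
    rw [pht_nat] at h4
    by_cases hz : z ≤ n
    · rw [hN_rep_le _ _ _ hz] at h4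
      omega
    · obtain ⟨l, rfl⟩ : ∃ l, z = n + l := ⟨z - n, by omega⟩
      rw [hN_rep_add, hN_rep_false] at h4
      push_cast at *
      omega
  have : ∀ T, IsCI n (pht (List.replicate n true ++ List.replicate n false)) T ↔ T = ∅ := by
    intro T
    constructor
    · intro hT
      rw [Finset.eq_empty_iff_forall_notMem]
      intro d hd
      obtain ⟨a, b, φ, hab, _, _, _, hmem⟩ := (tile_iff d).1 (hT.1 d hd)
      exact hreg _ (hT.2.1 d hd (a, φ a) ((hmem _).2 ⟨le_refl _, hab, rfl⟩))
    · rintro rfl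
      refine ⟨by simp, by simp, ?_, by simp⟩
      intro p hp
      exact absurd hp (hreg p)
  rw [PS_congr this]
  unfold PS
  have e : {R : Finset (Finset (ℤ × ℤ)) | R = ∅} = {∅} := rfl
  rw [e, finsum_mem_singleton]
  simp

/-! ### The recurrence side -/

lemma rep_cons (i : ℕ) (w : List Bool) :
    List.replicate i true ++ true :: w = List.replicate (i + 1) true ++ w := by
  rw [List.replicate_succ', List.append_assoc]; rfl

lemma psum_rep (i : ℕ) (w : List Bool) : ∀ (F : ℕ → List Bool → 𝕂),
    psum (List.replicate i true ++ true :: w) F =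
      psum (true :: w) (fun j v => F (j + i) (List.replicate i true ++ v)) := by
  induction i with
  | zero => intro F; simp
  | succ i ih =>
    intro F
    rw [List.replicate_succ, List.cons_append]
    have h : (List.replicate i true ++ true :: w).head? = some true := by
      cases i <;> simp [List.replicate_succ]
    rw [psum, h, ih]
    simp only [Option.some.injEq, Bool.true_eq_false, and_false, if_false, zero_add, add_assoc,
      List.cons_append]

lemma psum_first (k : ℕ) (w : List Bool) (F : ℕ → List Bool → 𝕂) :
    psum (List.replicate (k + 1) true ++ false :: w) F = F (k + 1) (List.replicate k true ++ w) +
      psum w (fun j v => F (j + (k + 2)) (List.replicate (k + 1) true ++ false :: v)) := by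
  rw [← rep_cons, psum_rep]
  simp only [psum, List.head?_cons, List.tail_cons, and_self, if_true, Bool.false_eq_true, false_and,
    if_false, zero_add, rep_cons]
  rw [add_comm 1 k]
  congr 2
  funext j v
  congr 1
  ring

lemma psum_two (k : ℕ) (w : List Bool) (F : ℕ → List Bool → 𝕂) :
    psum (List.replicate (k + 2) true ++ w) F =
      (if w.head? = some false then F (k + 2) (List.replicate (k + 1) true ++ w.tail) else 0) +
      psum w (fun j v => F (j + (k + 2)) (List.replicate (k + 2) true ++ v)) := by
  rw [← rep_cons, psum_rep]
  simp only [psum, true_and, rep_cons]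
  rw [show 1 + (k + 1) = k + 2 by ring]
  congr 2
  funext j v
  congr 1
  ring

lemma psum_R (k : ℕ) (w : List Bool) (F : ℕ → List Bool → 𝕂) (hF : ∀ v, F 0 v = 0) :
    psum (List.replicate k true ++ false :: true :: w) F = F k (List.replicate k true ++ w) +
      ((if w.head? = some false then F (k + 2) (List.replicate k true ++ w) else 0) +
      psum w (fun j v => F (j + (k + 2)) (List.replicate k true ++ false :: true :: v))) := by
  have hw : w.head? = some false → false :: w.tail = w := by
    intro h
    cases w with
    | nil => simp at h
    | cons a w => simp at h; simp [h]
  cases k with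
  | zero =>
    simp only [List.replicate_zero, List.nil_append, hF, psum, Bool.false_eq_true, false_and, if_false,
      true_and, zero_add]
    congr 1
    split_ifs with h
    · rw [hw h]
    · rfl
  | succ k =>
    rw [psum_first]
    simp only [psum, true_and, rep_cons]
    congr 1
    rw [show 1 + (k + 2) = k + 1 + 2 by ring]
    congr 1
    · split_ifs with h
      · rw [hw h]
      · rfl
    · congr 1
      funext j v
      congr 1
      ring

lemma rsum_head (w : List Bool) (G : List Bool → 𝕂) :
    rsum 0 w (fun v => if v.head? = some false then G v.tail else 0) =
      if w.head? = some true then G w.tail else 0 := by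
  cases w with
  | nil => simp [rsum]
  | cons a w =>
    cases a
    · simp [rsum]
    · simp [rsum_true, rsum_zero]

/-- The summand of the recurrence. -/
def Phi (n : ℕ) (j : ℕ) (v : List Bool) : 𝕂 :=
  if j ≤ n + 1 then qInt j * ZA n v else 0

/-- The recurrence sum, up to the global factor. -/
def WA (n : ℕ) (w : List Bool) : 𝕂 := psum w (Phi n)

lemma WA_rel {n k : ℕ} {w : List Bool} (hk : k + 1 < n + 1)
    (hl : (List.replicate (k + 1) true ++ false :: w).length = 2 * (n + 1))
    (hc : (List.replicate (k + 1) true ++ false :: w).count true = n + 1) :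
    qInt 2 * WA n (List.replicate (k + 1) true ++ false :: w) =
      WA n (List.replicate k true ++ false :: true :: w) +
      rsum 0 w (fun v => WA n (List.replicate (k + 2) true ++ v)) := by
  have hl' : w.length = 2 * n - k := by simp at hl; omega
  have hc' : w.count true = n - k := by simp at hc; omega
  unfold WA
  rw [psum_first, psum_R _ _ _ (by intro v; simp [Phi, qInt_zero])]
  simp only [psum_two]
  rw [rsum_add, rsum_head w (fun v => Phi n (k + 2) (List.replicate (k + 1) true ++ v)),
    mul_add, ← psum_mul]
  have e1 : psum w (fun j v => qInt 2 * Phi n (j + (k + 2)) (List.replicate (k + 1) true ++ false :: v)) =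
      psum w (fun j v => Phi n (j + (k + 2)) (List.replicate k true ++ false :: true :: v)) +
      psum w (fun j v => rsum 0 v
        (fun u => Phi n (j + (k + 2)) (List.replicate (k + 2) true ++ u))) := by
    rw [← psum_add]
    apply psum_congr
    intro j v hj hvl hvc
    unfold Phi
    by_cases h : j + (k + 2) ≤ n + 1
    · simp only [if_pos h]
      rw [rsum_mul, ← mul_add, ← rel_list]
      · ring
      · omega
      · simp; omega
      · simp; omega
    · simp only [if_neg h]
      rw [rsum_zero]; simp
  have e2 : qInt 2 * Phi n (k + 1) (List.replicate k true ++ w) = Phi n k (List.replicate k true ++ w) +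
      Phi n (k + 2) (List.replicate k true ++ w) := by
    unfold Phi
    rw [if_pos (by omega), if_pos (by omega), if_pos (by omega), ← mul_assoc, qInt_rec]
    push_cast
    rw [add_sub_cancel_right, add_assoc]
    norm_num
    ring
  have e3 : (if w.head? = some false then Phi n (k + 2) (List.replicate k true ++ w) else 0) +
      (if w.head? = some true then Phi n (k + 2) (List.replicate (k + 1) true ++ w.tail) else 0) =
      Phi n (k + 2) (List.replicate k true ++ w) := by
    cases w with
    | nil => simp at hl'; omega
    | cons a w => cases a <;> simp [rep_cons]
  have e4 := psum_comm w 0 (fun j u => Phi n (j + (k + 2)) (List.replicate (k + 2) true ++ u))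
  rw [e1, e2, e4]
  linear_combination -e3

lemma WA_zero {n : ℕ} {w : List Bool} (hl : (false :: w).length = 2 * (n + 1))
    (hc : (false :: w).count true = n + 1) : WA n (false :: w) = 0 := by
  unfold WA
  simp only [psum, Bool.false_eq_true, false_and, if_false, zero_add]
  rw [← psum_zero w]
  apply psum_congr
  intro j v hj hvl hvc
  simp at hl hc
  unfold Phi
  rw [zero_list]
  · simp
  · by_contra h
    have : v.count true ≤ v.length := List.count_le_length
    omega
  · simp; omega
  · simp; omega

lemma WA_top (n : ℕ) : WA n (List.replicate (n + 1) true ++ List.replicate (n + 1) false) =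
    qInt ((n + 1 : ℕ) : ℤ) := by
  have h : ∀ m (F : ℕ → List Bool → 𝕂), psum (List.replicate m false) F = 0 := by
    intro m
    induction m with
    | zero => intro F; rfl
    | succ m ih =>
      intro F
      rw [List.replicate_succ, psum, ih]
      simp
  unfold WA
  rw [List.replicate_succ (n := n) (a := false), psum_first, h, Phi, ZA_top]
  simp

/-! ### Uniqueness -/

lemma val_rsum {w : List Bool} {F : List Bool → 𝕂} {M : WithZero (Multiplicative ℤ)}
    (h : ∀ v, v.length = w.length → v.count true + 1 = w.count true →
      RatFunc.inftyValuation ℂ (F v) ≤ M) :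
    RatFunc.inftyValuation ℂ (rsum 0 w F) ≤ M := by
  rw [rsum_eq]
  apply Valuation.map_sum_le
  intro m hm
  split_ifs with hh
  · apply h
    · simp
    · obtain ⟨h1, _⟩ := hh
      have e1 := hN_full w
      have e2 := hN_full (w.set m false)
      have hm' : m < w.length := by simpa using hm
      rw [hN_set _ _ _ h1, List.length_set, if_pos hm'] at e2
      omega
  · simp

lemma decomp (w : List Bool) : (∃ i w', w = List.replicate i true ++ false :: w') ∨
    w = List.replicate w.length true := by
  induction w with
  | nil => right; rfl
  | cons a w ih =>
    cases a
    · left; exact ⟨0, w, rfl⟩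
    · rcases ih with ⟨i, w', h⟩ | h
      · left
        refine ⟨i + 1, w', ?_⟩
        rw [h]; rfl
      · right
        rw [List.length_cons, List.replicate_succ, ← h]

lemma rel_unique {N : ℕ} (hN' : 0 < N) (X : List Bool → 𝕂)
    (hrel : ∀ k w, k + 1 < N → (List.replicate (k + 1) true ++ false :: w).length = 2 * N →
      (List.replicate (k + 1) true ++ false :: w).count true = N →
      qInt 2 * X (List.replicate (k + 1) true ++ false :: w) =
      X (List.replicate k true ++ false :: true :: w) +
      rsum 0 w (fun v => X (List.replicate (k + 2) true ++ v)))
    (hzero : ∀ w, (false :: w).length = 2 * N → (false :: w).count true = N → X (false :: w) = 0)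
    (htop : X (List.replicate N true ++ List.replicate N false) = 0)
    (μ : List Bool) (hl : μ.length = 2 * N) (hc : μ.count true = N) : X μ = 0 := by
  let S : Set (List Bool) := {w | w.length = 2 * N ∧ w.count true = N}
  have hS : S.Finite := (List.finite_length_eq Bool (2 * N)).subset (fun w h => h.1)
  obtain ⟨w, hw, hmax⟩ := Set.exists_max_image S (fun w => RatFunc.inftyValuation ℂ (X w)) hS
    ⟨μ, hl, hc⟩
  have key : X w = 0 := by
    obtain ⟨wl, wc⟩ := hw
    rcases decomp w with ⟨i, w', rfl⟩ | h
    · have hil : i + w'.length + 1 = 2 * N := by simp at wl; omega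
      have hic : i + w'.count true = N := by simp at wc; omega
      cases i with
      | zero => exact hzero w' (by simpa using wl) (by simpa using wc)
      | succ k =>
        by_cases hk : k + 1 < N
        · by_contra hne
          have hr := congrArg (RatFunc.inftyValuation ℂ) (hrel k w' hk wl wc)
          rw [map_mul, qInt_two_val] at hr
          have h1 : RatFunc.inftyValuation ℂ (X (List.replicate k true ++ false :: true :: w') +
              rsum 0 w' (fun v => X (List.replicate (k + 2) true ++ v))) ≤
              RatFunc.inftyValuation ℂ (X (List.replicate (k + 1) true ++ false :: w')) := by
            apply Valuation.map_add_le
            · apply hmax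
              constructor
              · simp; omega
              · simp; omega
            · apply val_rsum
              intro v hv1 hv2
              apply hmax
              constructor
              · simp; omega
              · simp; omega
          rw [← hr] at h1
          have hpos : 0 < RatFunc.inftyValuation ℂ (X (List.replicate (k + 1) true ++ false :: w')) := by
            rw [zero_lt_iff]; exact (Valuation.ne_zero_iff _).2 hne
          have h2 : (WithZero.exp (1 : ℤ)) ≤ 1 := by
            exact le_of_mul_le_mul_right (by rw [one_mul]; exact h1) hpos
          rw [← WithZero.exp_zero, WithZero.exp_le_exp] at h2
          omega
        · have hk' : k + 1 = N := by omega
          have h0 : w'.count true = 0 := by omega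
          have : false :: w' = List.replicate N false := by
            rw [List.eq_replicate_iff]
            refine ⟨by simp; omega, ?_⟩
            intro b hb
            rw [List.count_eq_zero] at h0
            cases b
            · rfl
            · simp at hb; exact absurd hb h0
          rw [this, hk', htop]
    · rw [h] at wc
      simp at wc
      omega
  have := hmax μ ⟨hl, hc⟩
  simp only [key, map_zero, nonpos_iff_eq_zero] at this
  exact (Valuation.zero_iff _).1 this

lemma ZA_eq_WA (n : ℕ) (μ : List Bool) (hl : μ.length = 2 * (n + 1)) (hc : μ.count true = n + 1) :
    qInt ((n + 1 : ℕ) : ℤ) * ZA (n + 1) μ = WA n μ := by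
  rw [← sub_eq_zero]
  apply rel_unique (N := n + 1) (by omega)
    (fun w => qInt ((n + 1 : ℕ) : ℤ) * ZA (n + 1) w - WA n w) _ _ _ μ hl hc
  · intro k w hk h1 h2
    have e1 := rel_list hk h1 h2
    have e2 := WA_rel hk h1 h2
    have e3 : rsum 0 w (fun v => qInt ((n + 1 : ℕ) : ℤ) * ZA (n + 1) (List.replicate (k + 2) true ++ v)
        - WA n (List.replicate (k + 2) true ++ v)) =
        qInt ((n + 1 : ℕ) : ℤ) * rsum 0 w (fun v => ZA (n + 1) (List.replicate (k + 2) true ++ v)) -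
        rsum 0 w (fun v => WA n (List.replicate (k + 2) true ++ v)) := by
      rw [← rsum_mul, eq_sub_iff_add_eq, ← rsum_add]
      simp only [sub_add_cancel]
    rw [e3]
    linear_combination qInt ((n + 1 : ℕ) : ℤ) * e1 - e2
  · intro w h1 h2
    rw [zero_list (by omega) h1 h2, WA_zero h1 h2]
    simp
  · rw [ZA_top, WA_top]
    simp

/-- Let `μ` be a Dyck path of size `n+1`, `{i}` the set of positions
`≤ n+1` of its peaks (consecutive `UR` pairs, i.e. innermost caps of the associated
diagram, with position `n+1` corresponding to the rightmost vertical strand), and `μ_i`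
the Dyck path of size `n` obtained by deleting the corresponding `UR` pair.  Then
`Z(μ) = Σ_i ([i]/[n+1]) Z(μ_i)`. -/
theorem ZA_recurrence (n : ℕ) (μ : DyckPath (n + 1)) :
    ZA (n + 1) μ.1 =
      ∑ i ∈ (peaks μ.1).filter (fun j => j ≤ n + 1),
        (qInt i / qInt (n + 1)) * ZA n (removePeak μ.1 i) := by
  obtain ⟨w, hw⟩ := μ
  have hne : qInt ((n : ℤ) + 1) ≠ 0 := qInt_ne (by omega)
  have hcount : w.count true = n + 1 := by
    have h1 := hw.1
    have h2 := hw.2.1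
    have h3 := List.count_true_add_count_false (l := w)
    omega
  have H := ZA_eq_WA n w hw.1 hcount
  push_cast at H
  rw [peaks_sum w n (fun j v => qInt j / qInt (n + 1) * ZA n v)]
  have e : psum w (fun j v => if j ≤ n + 1 then qInt j / qInt (n + 1) * ZA n v else 0) =
      (qInt ((n : ℤ) + 1))⁻¹ * WA n w := by
    rw [WA, ← psum_mul]
    congr 1
    funext j v
    unfold Phi
    split_ifs
    · rw [div_eq_mul_inv]; ring
    · simp
  rw [e, ← H, inv_mul_cancel_left₀ hne]
end
end

section
/- For the recursively defined elements Q^{(n)} ∈ TL^B_n (Q^{(0)} = 1, Q^{(n+1)} = Q^{(n)} + ([n]_s/[n+1]_s)·Q^{(n)} e_n Q^{(n)}), one has (e_n Q^{(n)})² = −([n+1]_s/[n]_s) · e_n Q^{(n)} in TL^B_{n+1}, for all n ≥ 1. -/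
noncomputable section
open scoped Classical

/-! ### The field `ℂ(q,s)` and two-variable quantum integers -/

/-- The field `ℂ(q,s)` of rational functions in two variables. -/
abbrev 𝕃 : Type := FractionRing (MvPolynomial (Fin 2) ℂ)

/-- The variable `q`. -/
def qB : 𝕃 := algebraMap (MvPolynomial (Fin 2) ℂ) 𝕃 (MvPolynomial.X 0)

/-- The variable `s`. -/
def sB : 𝕃 := algebraMap (MvPolynomial (Fin 2) ℂ) 𝕃 (MvPolynomial.X 1)

/-- The two-variable quantum integer `[n]_s`: `[0]_s = 1` and
`[n]_s = q^(n-1) s + q^(-(n-1)) s⁻¹` for `n ≥ 1`. -/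
def bqInt (n : ℤ) : 𝕃 := if n = 0 then 1 else qB ^ (n - 1) * sB + qB ^ (1 - n) * sB⁻¹

/-! ### The Temperley–Lieb algebra of type B and its Jones–Wenzl projections -/

/-- Defining relations of the Temperley–Lieb algebra `TL^B_n` of type B.
The generator indexed by `i : Fin n` represents `e_i` (labels `0, …, n-1`):
the type A relations among `e_1, …, e_{n-1}`, together with `e_0² = -[1]_s e_0`,
`e_1 e_0 e_1 = (q s⁻¹ + q⁻¹ s) e_1`, and `e_0 e_i = e_i e_0` for `i ≥ 2`. -/
inductive TLBrel (n : ℕ) : FreeAlgebra 𝕃 (Fin n) → FreeAlgebra 𝕃 (Fin n) → Prop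
  | sqA (i : Fin n) (h : 1 ≤ (i : ℕ)) :
      TLBrel n (FreeAlgebra.ι 𝕃 i * FreeAlgebra.ι 𝕃 i) ((-(qB + qB⁻¹)) • FreeAlgebra.ι 𝕃 i)
  | sq0 (i : Fin n) (h : (i : ℕ) = 0) :
      TLBrel n (FreeAlgebra.ι 𝕃 i * FreeAlgebra.ι 𝕃 i) ((-(bqInt 1)) • FreeAlgebra.ι 𝕃 i)
  | braidA (i j : Fin n) (hi : 1 ≤ (i : ℕ)) (hj : 1 ≤ (j : ℕ))
      (h : (j : ℕ) = i + 1 ∨ (i : ℕ) = j + 1) :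
      TLBrel n (FreeAlgebra.ι 𝕃 i * FreeAlgebra.ι 𝕃 j * FreeAlgebra.ι 𝕃 i) (FreeAlgebra.ι 𝕃 i)
  | braid0 (i j : Fin n) (hi : (i : ℕ) = 1) (hj : (j : ℕ) = 0) :
      TLBrel n (FreeAlgebra.ι 𝕃 i * FreeAlgebra.ι 𝕃 j * FreeAlgebra.ι 𝕃 i)
        ((qB * sB⁻¹ + qB⁻¹ * sB) • FreeAlgebra.ι 𝕃 i)
  | comm (i j : Fin n) (h : (i : ℕ) + 1 < j ∨ (j : ℕ) + 1 < i) :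
      TLBrel n (FreeAlgebra.ι 𝕃 i * FreeAlgebra.ι 𝕃 j) (FreeAlgebra.ι 𝕃 j * FreeAlgebra.ι 𝕃 i)

/-- The Temperley–Lieb algebra `TL^B_n` of type B, with generators `e_0, …, e_{n-1}`. -/
abbrev TLB (n : ℕ) : Type := RingQuot (TLBrel n)

/-- The generator `e_i` of `TL^B_n` (0-based labels). -/
def EB {n : ℕ} (i : Fin n) : TLB n := RingQuot.mkAlgHom 𝕃 (TLBrel n) (FreeAlgebra.ι 𝕃 i)

set_option synthInstance.maxHeartbeats 1000000 in
/-- The natural inclusion `TL^B_n → TL^B_{n+1}`, sending `e_i` to `e_i`. -/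
def TLBincl (n : ℕ) : TLB n →ₐ[𝕃] TLB (n + 1) :=
  RingQuot.liftAlgHom 𝕃
    ⟨FreeAlgebra.lift 𝕃 (fun i => EB i.castSucc), by
      intro x y h
      induction h with
      | sqA i h =>
          have h2 := RingQuot.mkAlgHom_rel 𝕃 (TLBrel.sqA i.castSucc (by simpa using h))
          simp only [map_mul, map_smul, FreeAlgebra.lift_ι_apply, EB] at h2 ⊢
          exact h2
      | sq0 i h =>
          have h2 := RingQuot.mkAlgHom_rel 𝕃 (TLBrel.sq0 i.castSucc (by simpa using h))
          simp only [map_mul, map_smul, FreeAlgebra.lift_ι_apply, EB] at h2 ⊢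
          exact h2
      | braidA i j hi hj h =>
          have h2 := RingQuot.mkAlgHom_rel 𝕃
            (TLBrel.braidA i.castSucc j.castSucc (by simpa using hi) (by simpa using hj)
              (by simpa using h))
          simp only [map_mul, FreeAlgebra.lift_ι_apply, EB] at h2 ⊢
          exact h2
      | braid0 i j hi hj =>
          have h2 := RingQuot.mkAlgHom_rel 𝕃
            (TLBrel.braid0 i.castSucc j.castSucc (by simpa using hi) (by simpa using hj))
          simp only [map_mul, map_smul, FreeAlgebra.lift_ι_apply, EB] at h2 ⊢
          exact h2
      | comm i j h =>
          have h2 := RingQuot.mkAlgHom_rel 𝕃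
            (TLBrel.comm i.castSucc j.castSucc (by simpa using h))
          simp only [map_mul, FreeAlgebra.lift_ι_apply, EB] at h2 ⊢
          exact h2⟩

/-- The iterated natural inclusion `TL^B_n → TL^B_{n+k}`. -/
def TLBinclIter (n : ℕ) : (k : ℕ) → TLB n →ₐ[𝕃] TLB (n + k)
  | 0 => AlgHom.id 𝕃 (TLB n)
  | k + 1 => (TLBincl (n + k)).comp (TLBinclIter n k)

/-- The type B Jones–Wenzl projection `Q^{(n)} ∈ TL^B_n`, via the recurrence
`Q^{(0)} = 1`, `Q^{(n+1)} = Q^{(n)} + ([n]_s/[n+1]_s) Q^{(n)} e_n Q^{(n)}`. -/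
def JWB : (n : ℕ) → TLB n
  | 0 => 1
  | n + 1 =>
      TLBincl n (JWB n) +
        (bqInt n / bqInt (n + 1)) •
          (TLBincl n (JWB n) * EB (Fin.last n) * TLBincl n (JWB n))

theorem JWB_abs {K A : Type*} [Field K] [Ring A] [Algebra K A] (Q e f : A) (c d t : K)
    (hc : c ≠ 0) (hQ : Q * Q = Q) (hf : Q * f = f * Q)
    (he : (e * Q) * (e * Q) = (-c⁻¹) • (e * Q)) (hff : f * f = (-d) • f)
    (hfe : f * e * f = t • f) :
    (Q + c • (Q * e * Q)) * (Q + c • (Q * e * Q)) = Q + c • (Q * e * Q) ∧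
    (f * (Q + c • (Q * e * Q))) * (f * (Q + c • (Q * e * Q)))
      = (-d + c * t) • (f * (Q + c • (Q * e * Q))) := by
  have h1 : Q * (Q + c • (Q * e * Q)) = Q + c • (Q * e * Q) := by
    simp only [mul_add, mul_smul_comm, ← mul_assoc, hQ]
  have h2 : (Q * e * Q) * (Q * e * Q) = (-c⁻¹) • (Q * e * Q) := by
    calc (Q * e * Q) * (Q * e * Q) = Q * (e * (Q * Q) * (e * Q)) := by noncomm_ring
      _ = _ := by rw [hQ, he, mul_smul_comm, mul_assoc]
  have h3 : (Q * e * Q) * Q = Q * e * Q := by rw [mul_assoc, hQ]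
  have h4 : f * (Q + c • (Q * e * Q)) * f = (-d + c * t) • (f * Q) := by
    have a : f * Q * f = (-d) • (f * Q) := by
      rw [mul_assoc, hf, ← mul_assoc, hff, smul_mul_assoc]
    have b : f * (Q * e * Q) * f = t • (f * Q) := by
      calc f * (Q * e * Q) * f = (f * Q) * e * (Q * f) := by noncomm_ring
        _ = (Q * f) * e * (f * Q) := by rw [hf]
        _ = Q * (f * e * f) * Q := by noncomm_ring
        _ = _ := by rw [hfe, mul_smul_comm, smul_mul_assoc, hf, mul_assoc, hQ]
    rw [mul_add, add_mul, a, mul_smul_comm, smul_mul_assoc, b, smul_smul, add_smul]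
  refine ⟨?_, ?_⟩
  · rw [add_mul, h1, smul_mul_assoc, mul_add, h3, mul_smul_comm, h2, smul_smul,
      mul_neg, mul_inv_cancel₀ hc]
    simp
  · rw [← mul_assoc, h4, smul_mul_assoc, mul_assoc, h1]

theorem qB_ne : qB ≠ 0 := by
  simp [qB]

theorem sB_ne : sB ≠ 0 := by
  simp [sB]

theorem bqInt_zero : bqInt 0 = 1 := by simp [bqInt]

theorem bqInt_succ (k : ℕ) : bqInt (k + 1) = qB ^ k * sB + (qB ^ k)⁻¹ * sB⁻¹ := by
  have h : (k : ℤ) + 1 ≠ 0 := by omega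
  have h2 : (1 : ℤ) - (k + 1) = - (k : ℤ) := by ring
  rw [bqInt, if_neg h, h2, add_sub_cancel_right, zpow_neg, zpow_natCast]

theorem bqInt_succ_ne (k : ℕ) : bqInt (k + 1) ≠ 0 := by
  intro h
  rw [bqInt_succ] at h
  have hq := pow_ne_zero k qB_ne
  have hs := sB_ne
  have h2 : (qB ^ k * sB) ^ 2 + 1 = 0 := by
    field_simp at h
    linear_combination h
  have h3 : algebraMap (MvPolynomial (Fin 2) ℂ) 𝕃
      ((MvPolynomial.X 0 ^ k * MvPolynomial.X 1) ^ 2 + 1) = algebraMap _ 𝕃 0 := by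
    simpa only [map_add, map_mul, map_pow, map_one, map_zero, qB, sB] using h2
  have h4 := IsFractionRing.injective (MvPolynomial (Fin 2) ℂ) 𝕃 h3
  have h5 := congrArg (MvPolynomial.eval (fun _ => (0 : ℂ))) h4
  simp at h5

theorem bqInt_ne (n : ℕ) : bqInt n ≠ 0 := by
  cases n with
  | zero => simp [bqInt]
  | succ k => exact_mod_cast bqInt_succ_ne k

theorem TLBincl_EB {n : ℕ} (i : Fin n) : TLBincl n (EB i) = EB i.castSucc := by
  simp [TLBincl, EB]

theorem incl_comm (n : ℕ) (x : TLB n) :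
    TLBincl (n + 1) (TLBincl n x) * EB (Fin.last (n + 1))
      = EB (Fin.last (n + 1)) * TLBincl (n + 1) (TLBincl n x) := by
  obtain ⟨y, rfl⟩ := RingQuot.mkAlgHom_surjective 𝕃 (TLBrel n) x
  induction y using FreeAlgebra.induction with
  | grade0 r => simp only [AlgHom.commutes]; exact Algebra.commutes _ _
  | grade1 i =>
    change TLBincl (n + 1) (TLBincl n (EB i)) * _ = _ * TLBincl (n + 1) (TLBincl n (EB i))
    rw [TLBincl_EB, TLBincl_EB]
    have h2 := RingQuot.mkAlgHom_rel 𝕃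
      (TLBrel.comm i.castSucc.castSucc (Fin.last (n + 1)) (by left; simp))
    simp only [map_mul] at h2
    exact h2
  | mul a b ha hb =>
    simp only [map_mul]
    rw [mul_assoc, hb, ← mul_assoc, ha, mul_assoc]
  | add a b ha hb =>
    simp only [map_add]
    rw [add_mul, mul_add, ha, hb]

theorem last_sq (n : ℕ) : (EB (Fin.last (n + 1)) : TLB (n + 1 + 1)) * EB (Fin.last (n + 1))
    = (-(qB + qB⁻¹)) • EB (Fin.last (n + 1)) := by
  have h2 := RingQuot.mkAlgHom_rel 𝕃 (TLBrel.sqA (Fin.last (n + 1)) (by simp))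
  simp only [map_mul, map_smul] at h2
  exact h2

theorem fld0 {K : Type*} [Field K] (q s A : K) (hq : q ≠ 0) (hs : s ≠ 0) (hA : A = s + s⁻¹)
    (h : A ≠ 0) : -(q + q⁻¹) + 1 / A * (q * s⁻¹ + q⁻¹ * s) = -((q * s + q⁻¹ * s⁻¹) / A) := by
  have : -(q + q⁻¹) * A + (q * s⁻¹ + q⁻¹ * s) = -(q * s + q⁻¹ * s⁻¹) := by rw [hA]; ring
  rw [← neg_div, ← this, add_div, mul_div_cancel_right₀ _ h]
  ring

theorem fld1 {K : Type*} [Field K] (q s A : K) (k : ℕ) (hq : q ≠ 0) (hs : s ≠ 0)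
    (hA : A = q ^ (k + 1) * s + (q ^ (k + 1))⁻¹ * s⁻¹) (h : A ≠ 0) :
    -(q + q⁻¹) + (q ^ k * s + (q ^ k)⁻¹ * s⁻¹) / A * 1
      = -((q ^ (k + 1 + 1) * s + (q ^ (k + 1 + 1))⁻¹ * s⁻¹) / A) := by
  have : -(q + q⁻¹) * A + (q ^ k * s + (q ^ k)⁻¹ * s⁻¹)
      = -(q ^ (k + 1 + 1) * s + (q ^ (k + 1 + 1))⁻¹ * s⁻¹) := by
    rw [hA]; field_simp; ring
  rw [← neg_div, ← this, add_div (-(q + q⁻¹) * A), mul_div_cancel_right₀ _ h, mul_one]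

theorem JWB_main (n : ℕ) : JWB n * JWB n = JWB n ∧
    (EB (Fin.last n) * TLBincl n (JWB n)) * (EB (Fin.last n) * TLBincl n (JWB n)) =
      (-(bqInt (n + 1) / bqInt n)) • (EB (Fin.last n) * TLBincl n (JWB n)) := by
  induction n with
  | zero =>
    refine ⟨by simp [JWB], ?_⟩
    have h2 := RingQuot.mkAlgHom_rel 𝕃 (TLBrel.sq0 (Fin.last 0) (by simp))
    simp only [map_mul, map_smul] at h2
    simp only [JWB, map_one, mul_one, Nat.cast_zero, zero_add, bqInt_zero, div_one]
    exact h2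
  | succ n ih =>
    obtain ⟨h1, h2⟩ := ih
    have hc : bqInt n / bqInt (n + 1) ≠ 0 := div_ne_zero (bqInt_ne n) (bqInt_succ_ne n)
    have hQ : TLBincl n (JWB n) * TLBincl n (JWB n) = TLBincl n (JWB n) := by
      rw [← map_mul, h1]
    have he := congrArg (TLBincl (n + 1)) h2
    rw [map_smul, map_mul, map_mul, TLBincl_EB, ← inv_div (bqInt n)] at he
    have hQ' := congrArg (TLBincl (n + 1)) hQ
    rw [map_mul] at hQ'
    obtain ⟨t, ht, ht'⟩ : ∃ t : 𝕃, (EB (Fin.last (n + 1)) : TLB (n + 1 + 1)) *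
        EB (Fin.last n).castSucc * EB (Fin.last (n + 1)) = t • EB (Fin.last (n + 1)) ∧
        -(qB + qB⁻¹) + bqInt n / bqInt (n + 1) * t
          = -(bqInt ((n + 1 : ℕ) + 1) / bqInt (n + 1 : ℕ)) := by
      have hq := qB_ne
      have hs := sB_ne
      have hne := bqInt_succ_ne n
      rcases n with _ | k
      · refine ⟨qB * sB⁻¹ + qB⁻¹ * sB, ?_, ?_⟩
        · have h2 := RingQuot.mkAlgHom_rel 𝕃
            (TLBrel.braid0 (Fin.last 1) (Fin.last 0).castSucc (by simp) (by simp))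
          simp only [map_mul, map_smul] at h2
          exact h2
        · have e1 : bqInt ((0 + 1 : ℕ) : ℤ) = bqInt ((0 : ℕ) + 1) := by norm_num
          rw [e1, bqInt_succ (0 + 1)]
          simp only [Nat.cast_zero, bqInt_zero, zero_add, pow_one]
          refine fld0 _ _ _ hq hs ?_ (bqInt_succ_ne 0)
          simpa using bqInt_succ 0
      · refine ⟨1, ?_, ?_⟩
        · have h2 := RingQuot.mkAlgHom_rel 𝕃
            (TLBrel.braidA (Fin.last (k + 1 + 1)) (Fin.last (k + 1)).castSucc (by simp) (by simp)
              (by simp))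
          simp only [map_mul] at h2
          rw [one_smul]
          exact h2
        · have e1 : bqInt ((k + 1 + 1 : ℕ) : ℤ) = bqInt ((k + 1 : ℕ) + 1) := by
            push_cast; rfl
          have e2 : bqInt ((k + 1 : ℕ) : ℤ) = qB ^ k * sB + (qB ^ k)⁻¹ * sB⁻¹ := by
            rw [← bqInt_succ]; push_cast; rfl
          rw [e1, e2, bqInt_succ (k + 1 + 1)]
          exact fld1 _ _ _ k hq hs (bqInt_succ (k + 1)) hne
    obtain ⟨a, b⟩ := JWB_abs (TLBincl (n + 1) (TLBincl n (JWB n)))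
      (EB (Fin.last n).castSucc) (EB (Fin.last (n + 1))) _ (qB + qB⁻¹) t hc hQ' (incl_comm n _) he (last_sq n) ht
    have hQs := (JWB_abs (TLBincl n (JWB n)) (EB (Fin.last n)) 0 _ 0 0 hc hQ (by simp)
      (by rw [inv_div]; exact h2) (by simp) (by simp)).1
    refine ⟨by simpa only [JWB] using hQs, ?_⟩
    rw [ht'] at b
    simp only [JWB, map_add, map_smul, map_mul, TLBincl_EB]
    exact b

/-- For `n ≥ 1`, `(e_n Q^{(n)})² = -([n+1]_s/[n]_s) e_n Q^{(n)}`
in `TL^B_{n+1}`. -/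
theorem e_JWB_sq (n : ℕ) (hn : 1 ≤ n) :
    (EB (Fin.last n) * TLBincl n (JWB n)) * (EB (Fin.last n) * TLBincl n (JWB n)) =
      (-(bqInt (n + 1) / bqInt n)) • (EB (Fin.last n) * TLBincl n (JWB n)) := by
  exact (JWB_main n).2
end
end
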